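/- arXiv:2302.04786 — 6 statements merged into one kernel-verified Lean document; each statement's English description precedes it below -/
import Mathlib

section
/- Every ordered Banach space (E, ‖·‖) can be renormed by an equivalent norm ‖·‖₀ (satisfying 0 ≤ x ≤ y implies ‖x‖₀ ≤ ‖y‖₀) such that (E, ‖·‖₀) is regularly ordered, i.e., ‖x‖₀ = inf{‖y‖₀ : y ∈ E, −y ≤ x ≤ y} for every x ∈ E. -/
/-!
Let `N x` be the infimum of `‖y‖` over all `y` with `-y ≤ x ≤ y`. Such a `y` is positive, and `N`
agrees with the norm on positive vectors because the norm is monotone there; hence replacing `‖y‖`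
by `N y` in the infimum changes nothing, which is regularity of `N`. From `0 ≤ x + y ≤ 2 y` one
gets `‖x‖ ≤ 3 ‖y‖`, so `‖x‖ ≤ 3 N x`. The reverse estimate `N x ≤ C ‖x‖` is the Klee–Andô theorem:
absolutely summable combinations of normalized positive vectors define a bounded operator
`ℓ¹ → E`, onto because the cone is generating, so the open mapping theorem gives
`x = ∑ fᵢ vᵢ` with `∑ |fᵢ| ≤ C ‖x‖`; then `y = ∑ |fᵢ| vᵢ` converges, satisfies `-y ≤ x ≤ y` because
the cone is closed, and has norm at most `C ‖x‖`.
-/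

open Set
open scoped lp Pointwise

section OrderedGroup

variable {E : Type*} [AddCommGroup E] [Preorder E] [IsOrderedAddMonoid E]

theorem isDirectedOrder_of_exists_eq_sub_nonneg
    (hgen : ∀ x : E, ∃ u v : E, 0 ≤ u ∧ 0 ≤ v ∧ x = u - v) : IsDirectedOrder E where
  directed x y := by
    obtain ⟨u, v, hu, hv, rfl⟩ := hgen x
    obtain ⟨u', v', hu', hv', rfl⟩ := hgen y
    exact ⟨u + u', (sub_le_self u hv).trans (le_add_of_nonneg_right hu'),
      (sub_le_self u' hv').trans (le_add_of_nonneg_left hu)⟩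

theorem exists_neg_le_and_le [IsDirectedOrder E] (x : E) : ∃ y : E, -y ≤ x ∧ x ≤ y := by
  obtain ⟨y, hxy, hnegxy⟩ := exists_ge_ge x (-x)
  exact ⟨y, neg_le.mp hnegxy, hxy⟩

theorem orderClosedTopology_of_isClosed_nonneg [TopologicalSpace E] [ContinuousSub E]
    (hclosed : IsClosed {x : E | 0 ≤ x}) : OrderClosedTopology E where
  isClosed_le' := by
    have hcont : Continuous fun q : E × E ↦ q.2 - q.1 := continuous_snd.sub continuous_fst
    simpa only [preimage_ofPred_eq, sub_nonneg] using hclosed.preimage hcont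

end OrderedGroup

section OrderedModule

variable {𝕜 E : Type*} [AddCommGroup E] [Preorder E] [IsOrderedAddMonoid E] {x y : E}

theorem nonneg_of_neg_le_of_le [Module ℝ E] [PosSMulMono ℝ E] (hneg : -y ≤ x) (hle : x ≤ y) :
    0 ≤ y := by
  have two_smul_nonneg : 0 ≤ (2 : ℝ) • y := by
    rw [two_smul]
    exact neg_le_iff_add_nonneg.mp (hneg.trans hle)
  simpa only [smul_smul, inv_mul_cancel₀ (two_ne_zero' ℝ), one_smul] using
    smul_nonneg (by positivity : (0 : ℝ) ≤ 2⁻¹) two_smul_nonneg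

variable [Ring 𝕜] [LinearOrder 𝕜] [IsOrderedRing 𝕜] [Module 𝕜 E] [PosSMulMono 𝕜 E]

theorem smul_le_abs_smul (hneg : -y ≤ x) (hle : x ≤ y) (c : 𝕜) :
    c • x ≤ |c| • y := by
  rcases le_total 0 c with hc | hc
  · rw [abs_of_nonneg hc]
    exact smul_le_smul_of_nonneg_left hle hc
  · rw [abs_of_nonpos hc, ← neg_smul_neg]
    exact smul_le_smul_of_nonneg_left (neg_le.mp hneg) (neg_nonneg.mpr hc)

theorem neg_abs_smul_le_smul (hneg : -y ≤ x) (hle : x ≤ y) (c : 𝕜) :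
    -(|c| • y) ≤ c • x := by
  rw [neg_le, ← neg_smul, ← abs_neg]
  exact smul_le_abs_smul hneg hle (-c)

end OrderedModule

section OrderRegularization

variable {E : Type*} [AddCommGroup E] [Module ℝ E] [Preorder E]

/-- The values of a seminorm `p` at the vectors `y` that dominate `x` in absolute value, in the
sense that `-y ≤ x ≤ y`. -/
def dominatingValues (p : Seminorm ℝ E) (x : E) : Set ℝ :=
  {r | ∃ y : E, -y ≤ x ∧ x ≤ y ∧ r = p y}

theorem bddBelow_dominatingValues (p : Seminorm ℝ E) (x : E) :
    BddBelow (dominatingValues p x) :=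
  ⟨0, by rintro _ ⟨y, -, -, rfl⟩; exact apply_nonneg p y⟩

theorem sInf_dominatingValues_zero (p : Seminorm ℝ E) : sInf (dominatingValues p 0) = 0 :=
  IsLeast.csInf_eq ⟨⟨0, neg_zero.le, le_rfl, (map_zero p).symm⟩,
    by rintro _ ⟨y, -, -, rfl⟩; exact apply_nonneg p y⟩

variable [IsOrderedAddMonoid E]

theorem nonempty_dominatingValues [IsDirectedOrder E] (p : Seminorm ℝ E) (x : E) :
    (dominatingValues p x).Nonempty :=
  let ⟨y, hneg, hle⟩ := exists_neg_le_and_le x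
  ⟨p y, y, hneg, hle, rfl⟩

theorem sInf_dominatingValues_add_le [IsDirectedOrder E] (p : Seminorm ℝ E) (x z : E) :
    sInf (dominatingValues p (x + z)) ≤
      sInf (dominatingValues p x) + sInf (dominatingValues p z) := by
  have hx := nonempty_dominatingValues p x
  have hz := nonempty_dominatingValues p z
  rw [← csInf_add hx (bddBelow_dominatingValues p x) hz (bddBelow_dominatingValues p z)]
  refine le_csInf (hx.add hz) ?_
  rintro _ ⟨_, ⟨y, hyneg, hyle, rfl⟩, _, ⟨w, hwneg, hwle, rfl⟩, rfl⟩
  calc sInf (dominatingValues p (x + z)) ≤ p (y + w) :=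
        csInf_le (bddBelow_dominatingValues p _)
          ⟨y + w, by rw [neg_add]; exact add_le_add hyneg hwneg, add_le_add hyle hwle, rfl⟩
    _ ≤ p y + p w := map_add_le_add p y w

variable [PosSMulMono ℝ E]

theorem abs_smul_dominatingValues_subset (p : Seminorm ℝ E) (c : ℝ) (x : E) :
    |c| • dominatingValues p x ⊆ dominatingValues p (c • x) := by
  rintro _ ⟨_, ⟨y, hneg, hle, rfl⟩, rfl⟩
  exact ⟨|c| • y, neg_abs_smul_le_smul hneg hle c, smul_le_abs_smul hneg hle c,
    by simp [map_smul_eq_mul]⟩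

variable [IsDirectedOrder E]

theorem sInf_dominatingValues_smul_le (p : Seminorm ℝ E) (c : ℝ) (x : E) :
    sInf (dominatingValues p (c • x)) ≤ ‖c‖ * sInf (dominatingValues p x) := by
  rw [Real.norm_eq_abs, ← smul_eq_mul, ← Real.sInf_smul_of_nonneg (abs_nonneg c)]
  exact csInf_le_csInf (bddBelow_dominatingValues p _) (nonempty_dominatingValues p x).smul_set
    (abs_smul_dominatingValues_subset p c x)

/-- The order regularization `x ↦ inf {p y | -y ≤ x ≤ y}` of a seminorm `p`. Directedness of the
order guarantees that the infimum is over a nonempty set. An ordered space is regularly ordered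
when its norm is a fixed point of this construction. -/
noncomputable def orderRegularization (p : Seminorm ℝ E) : Seminorm ℝ E :=
  Seminorm.ofSMulLE (fun x ↦ sInf (dominatingValues p x)) (sInf_dominatingValues_zero p)
    (sInf_dominatingValues_add_le p) (sInf_dominatingValues_smul_le p)

variable {p : Seminorm ℝ E} {x y : E}

theorem orderRegularization_le (hneg : -y ≤ x) (hle : x ≤ y) : orderRegularization p x ≤ p y :=
  csInf_le (bddBelow_dominatingValues p x) ⟨y, hneg, hle, rfl⟩

theorem le_orderRegularization {b : ℝ} (h : ∀ y, -y ≤ x → x ≤ y → b ≤ p y) :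
    b ≤ orderRegularization p x :=
  le_csInf (nonempty_dominatingValues p x)
    (by rintro _ ⟨y, hneg, hle, rfl⟩; exact h y hneg hle)

theorem orderRegularization_eq_of_nonneg (hp : MonotoneOn p (Ici 0)) (hx : 0 ≤ x) :
    orderRegularization p x = p x :=
  le_antisymm (orderRegularization_le (neg_le_self hx) le_rfl)
    (le_orderRegularization fun _ _ hle ↦ hp hx (hx.trans hle) hle)

theorem monotoneOn_orderRegularization (hp : MonotoneOn p (Ici 0)) :
    MonotoneOn (orderRegularization p) (Ici 0) :=
  hp.congr fun _ hx ↦ (orderRegularization_eq_of_nonneg hp hx).symm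

theorem orderRegularization_orderRegularization (hp : MonotoneOn p (Ici 0)) :
    orderRegularization (orderRegularization p) = orderRegularization p := by
  ext x
  refine congrArg sInf (Set.ext fun r ↦ exists_congr fun y ↦
    and_congr_right fun hneg ↦ and_congr_right fun hle ↦ ?_)
  rw [orderRegularization_eq_of_nonneg hp (nonneg_of_neg_le_of_le hneg hle)]

theorem le_three_mul_orderRegularization (hp : MonotoneOn p (Ici 0)) (x : E) :
    p x ≤ 3 * orderRegularization p x := by
  rw [← div_le_iff₀' three_pos]
  refine le_orderRegularization fun y hneg hle ↦ (div_le_iff₀' three_pos).mpr ?_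
  have hxy_nonneg : 0 ≤ x + y := neg_le_iff_add_nonneg.mp hneg
  have hxy_le : x + y ≤ y + y := add_le_add_left hle y
  calc p x = p (x + y - y) := by rw [add_sub_cancel_right]
    _ ≤ p (x + y) + p y := map_sub_le_add p _ _
    _ ≤ p (y + y) + p y := by gcongr; exact hp hxy_nonneg (hxy_nonneg.trans hxy_le) hxy_le
    _ ≤ p y + p y + p y := by gcongr; exact map_add_le_add p y y
    _ = 3 * p y := by ring

end OrderRegularization

section BoundedFamily

theorem summable_norm_l1 {ι F : Type*} [NormedAddCommGroup F] (f : ℓ¹(ι, F)) :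
    Summable fun i ↦ ‖f i‖ := by
  simpa using f.2.summable

theorem norm_l1_eq_tsum {ι F : Type*} [NormedAddCommGroup F] (f : ℓ¹(ι, F)) :
    ‖f‖ = ∑' i, ‖f i‖ := by
  simpa using lp.norm_eq_tsum_rpow (by simp) f

variable {ι 𝕜 E : Type*} [NormedAddCommGroup E] {v : ι → E} {K : ℝ}

theorem norm_tsum_smul_le [NormedRing 𝕜] [Module 𝕜 E] [IsBoundedSMul 𝕜 E]
    (hv : ∀ i, ‖v i‖ ≤ K) {f : ι → 𝕜} (hf : Summable fun i ↦ ‖f i‖) :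
    ‖∑' i, f i • v i‖ ≤ (∑' i, ‖f i‖) * K :=
  tsum_of_norm_bounded (hf.hasSum.mul_right K) fun i ↦
    (norm_smul_le _ _).trans (by gcongr; exact hv i)

variable [CompleteSpace E]

theorem summable_smul_of_norm_le [NormedRing 𝕜] [Module 𝕜 E] [IsBoundedSMul 𝕜 E]
    (hv : ∀ i, ‖v i‖ ≤ K) {f : ι → 𝕜} (hf : Summable fun i ↦ ‖f i‖) :
    Summable fun i ↦ f i • v i :=
  .of_norm_bounded (hf.mul_right K) fun i ↦ (norm_smul_le _ _).trans (by gcongr; exact hv i)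

/-- The bounded operator `f ↦ ∑ i, f i • v i` on `ℓ¹(ι, 𝕜)` attached to a bounded family `v`. -/
noncomputable def l1LinearCombination [NormedField 𝕜] [NormedSpace 𝕜 E]
    (hv : ∀ i, ‖v i‖ ≤ K) : ℓ¹(ι, 𝕜) →L[𝕜] E :=
  LinearMap.mkContinuous
    { toFun f := ∑' i, f i • v i
      map_add' f g := by
        simpa [add_smul] using (summable_smul_of_norm_le hv (summable_norm_l1 f)).tsum_add
          (summable_smul_of_norm_le hv (summable_norm_l1 g))
      map_smul' c f := by
        simpa [mul_smul] using
          (summable_smul_of_norm_le hv (summable_norm_l1 f)).tsum_const_smul c }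
    K fun f ↦ by
      rw [norm_l1_eq_tsum, mul_comm]
      exact norm_tsum_smul_le hv (summable_norm_l1 f)

theorem l1LinearCombination_apply [NormedField 𝕜] [NormedSpace 𝕜 E]
    (hv : ∀ i, ‖v i‖ ≤ K) (f : ℓ¹(ι, 𝕜)) :
    l1LinearCombination hv f = ∑' i, f i • v i :=
  rfl

theorem l1LinearCombination_surjective [NormedField 𝕜] [NormedSpace 𝕜 E]
    (hv : ∀ i, ‖v i‖ ≤ K) (hspan : Submodule.span 𝕜 (range v) = ⊤) :
    Function.Surjective (l1LinearCombination (𝕜 := 𝕜) hv) := by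
  classical
  rw [← ContinuousLinearMap.coe_coe, ← LinearMap.range_eq_top, eq_top_iff, ← hspan,
    Submodule.span_le]
  rintro _ ⟨i, rfl⟩
  refine ⟨lp.single 1 i 1, ?_⟩
  rw [ContinuousLinearMap.coe_coe, l1LinearCombination_apply, tsum_eq_single i]
  · simp
  · intro j hj
    simp [hj]

theorem exists_hasSum_smul_of_span_eq_top [NontriviallyNormedField 𝕜] [CompleteSpace 𝕜]
    [NormedSpace 𝕜 E] (hv : ∀ i, ‖v i‖ ≤ K) (hspan : Submodule.span 𝕜 (range v) = ⊤) :
    ∃ C > 0, ∀ x : E, ∃ f : ι → 𝕜, Summable (fun i ↦ ‖f i‖) ∧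
      HasSum (fun i ↦ f i • v i) x ∧ ∑' i, ‖f i‖ ≤ C * ‖x‖ := by
  obtain ⟨C, hC, hpreimage⟩ :=
    (l1LinearCombination (𝕜 := 𝕜) hv).exists_preimage_norm_le
      (l1LinearCombination_surjective hv hspan)
  refine ⟨C, hC, fun x ↦ ?_⟩
  obtain ⟨f, rfl, hf⟩ := hpreimage x
  exact ⟨f, summable_norm_l1 f, (summable_smul_of_norm_le hv (summable_norm_l1 f)).hasSum,
    (norm_l1_eq_tsum f).symm.trans_le hf⟩

end BoundedFamily

section KleeAndo

variable {E : Type*} [NormedAddCommGroup E] [NormedSpace ℝ E] [Preorder E]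
  [IsOrderedAddMonoid E] [IsDirectedOrder E]

theorem span_range_normalized_nonneg :
    Submodule.span ℝ (range fun u : Ici (0 : E) ↦ ‖(u : E)‖⁻¹ • (u : E)) = ⊤ := by
  set S := Submodule.span ℝ (range fun u : Ici (0 : E) ↦ ‖(u : E)‖⁻¹ • (u : E))
  have mem_of_nonneg {u : E} (hu : 0 ≤ u) : u ∈ S := by
    rcases eq_or_ne u 0 with rfl | hne
    · exact S.zero_mem
    · rw [← smul_inv_smul₀ (norm_ne_zero_iff.mpr hne) u]
      exact S.smul_mem _ (Submodule.subset_span ⟨⟨u, hu⟩, rfl⟩)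
  refine eq_top_iff.mpr fun x _ ↦ ?_
  obtain ⟨u, hxu, hu⟩ := exists_ge_ge x 0
  rw [← sub_sub_cancel u x]
  exact S.sub_mem (mem_of_nonneg hu) (mem_of_nonneg (sub_nonneg.mpr hxu))

theorem exists_neg_le_and_le_and_norm_le [CompleteSpace E] [PosSMulMono ℝ E]
    [OrderClosedTopology E] :
    ∃ C > 0, ∀ x : E, ∃ y : E, -y ≤ x ∧ x ≤ y ∧ ‖y‖ ≤ C * ‖x‖ := by
  let v (u : Ici (0 : E)) : E := ‖(u : E)‖⁻¹ • (u : E)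
  have norm_v_le_one (u) : ‖v u‖ ≤ 1 := by
    simpa using inv_norm_smul_mem_unitClosedBall (u : E)
  have neg_v_le (u) : -v u ≤ v u :=
    neg_le_self (smul_nonneg (inv_nonneg.mpr (norm_nonneg _)) u.2)
  obtain ⟨C, hC, hsum⟩ :=
    exists_hasSum_smul_of_span_eq_top norm_v_le_one span_range_normalized_nonneg
  refine ⟨C, hC, fun x ↦ ?_⟩
  obtain ⟨f, hf, hfx, hfC⟩ := hsum x
  have abs_summable : Summable fun u ↦ ‖|f u|‖ := by simpa only [norm_abs_eq_norm] using hf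
  have hy := (summable_smul_of_norm_le norm_v_le_one abs_summable).hasSum
  refine ⟨∑' u, |f u| • v u,
    hasSum_le (fun u ↦ neg_abs_smul_le_smul (neg_v_le u) le_rfl (f u)) hy.neg hfx,
    hasSum_le (fun u ↦ smul_le_abs_smul (neg_v_le u) le_rfl (f u)) hfx hy, ?_⟩
  calc ‖∑' u, |f u| • v u‖ ≤ (∑' u, ‖|f u|‖) * 1 := norm_tsum_smul_le norm_v_le_one abs_summable
    _ = ∑' u, ‖f u‖ := by simp only [norm_abs_eq_norm, mul_one]
    _ ≤ C * ‖x‖ := hfC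

end KleeAndo

/-- **Renorming an ordered Banach space to a regularly ordered one.**
Every ordered Banach space `(E, ‖·‖)` admits an equivalent norm `N` (monotone on
`0 ≤ x ≤ y`) for which `E` is regularly ordered:
`N x = inf {N y : -y ≤ x ≤ y}` for all `x`. -/
theorem exists_equivalent_regular_norm
    {E : Type*} [NormedAddCommGroup E] [NormedSpace ℝ E] [CompleteSpace E] [PartialOrder E]
    (hadd : ∀ x y z : E, x ≤ y → x + z ≤ y + z)
    (hsmul : ∀ (c : ℝ) (x y : E), 0 ≤ c → x ≤ y → c • x ≤ c • y)
    (hclosed : IsClosed {x : E | 0 ≤ x})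
    (hgen : ∀ x : E, ∃ u v : E, 0 ≤ u ∧ 0 ≤ v ∧ x = u - v)
    (hnormmono : ∀ x y : E, 0 ≤ x → x ≤ y → ‖x‖ ≤ ‖y‖) :
    ∃ N : E → ℝ,
      -- `N` is a norm
      (∀ x : E, N x = 0 ↔ x = 0) ∧
      (∀ (c : ℝ) (x : E), N (c • x) = |c| * N x) ∧
      (∀ x y : E, N (x + y) ≤ N x + N y) ∧
      -- `N` is equivalent to the original norm
      (∃ c C : ℝ, 0 < c ∧ 0 < C ∧ ∀ x : E, c * ‖x‖ ≤ N x ∧ N x ≤ C * ‖x‖) ∧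
      -- `N` is monotone on order intervals `0 ≤ x ≤ y`
      (∀ x y : E, 0 ≤ x → x ≤ y → N x ≤ N y) ∧
      -- `(E, N)` is regularly ordered
      (∀ x : E, N x = sInf {r : ℝ | ∃ y : E, -y ≤ x ∧ x ≤ y ∧ r = N y}) := by
  have : IsOrderedAddMonoid E := { add_le_add_left := fun x y h z ↦ hadd x y z h }
  have : PosSMulMono ℝ E := ⟨fun c hc x y h ↦ hsmul c x y hc h⟩
  have : OrderClosedTopology E := orderClosedTopology_of_isClosed_nonneg hclosed
  have : IsDirectedOrder E := isDirectedOrder_of_exists_eq_sub_nonneg hgen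
  have norm_mono : MonotoneOn (normSeminorm ℝ E) (Ici 0) := fun x hx y _ h ↦ hnormmono x y hx h
  obtain ⟨C, hC, hdom⟩ := exists_neg_le_and_le_and_norm_le (E := E)
  let N := orderRegularization (normSeminorm ℝ E)
  have norm_le (x : E) : ‖x‖ ≤ 3 * N x := le_three_mul_orderRegularization norm_mono x
  have le_norm (x : E) : N x ≤ C * ‖x‖ := by
    obtain ⟨y, hneg, hle, hy⟩ := hdom x
    exact (orderRegularization_le hneg hle).trans hy
  refine ⟨N, fun x ↦ ⟨fun h ↦ ?_, ?_⟩, map_smul_eq_mul N, map_add_le_add N,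
    ⟨3⁻¹, C, by positivity, hC, fun x ↦ ⟨?_, le_norm x⟩⟩, fun x y hx hxy ↦ ?_, fun x ↦ ?_⟩
  · simpa [h] using norm_le x
  · rintro rfl
    exact map_zero N
  · exact (inv_mul_le_iff₀ three_pos).mpr (norm_le x)
  · exact monotoneOn_orderRegularization norm_mono hx (hx.trans hxy) hxy
  · exact (DFunLike.congr_fun (orderRegularization_orderRegularization norm_mono) x).symm
end

section
/- Let E be a regularly ordered Banach space. Then the topological dual E*, ordered by the dual cone E*₊ = {φ ∈ E* : φ(x) ≥ 0 for all x ∈ E₊}, is again a regularly ordered Banach space: E*₊ is closed, proper and generating, 0 ≤ φ ≤ ψ (in the dual order) implies ‖φ‖ ≤ ‖ψ‖, and ‖φ‖ = inf{‖ψ‖ : ψ ∈ E*, −ψ ≤ φ ≤ ψ} for every φ ∈ E*. -/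
/-- The dual cone in the topological dual of an ordered Banach space `E`. -/
def dualPosCone (E : Type*) [NormedAddCommGroup E] [NormedSpace ℝ E] [PartialOrder E] :
    Set (E →L[ℝ] ℝ) :=
  {φ | ∀ x : E, 0 ≤ x → 0 ≤ φ x}

/-!
Regularity splits into two properties of the norm that are exchanged by duality: absolute
monotonicity, `-y ≤ x ≤ y → ‖x‖ ≤ ‖y‖`, and approximate absolute domination, by which every `x`
has some `y` with `-y ≤ x ≤ y` and `‖y‖` as close to `‖x‖` as desired.

If `-ψ ≤ φ ≤ ψ` in the dual and `-y ≤ x ≤ y` in `E`, then `|φ x| ≤ ψ y`; letting `x` and `y` run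
through the open unit ball turns approximate domination on `E` into absolute monotonicity on the
dual. Conversely, if the norm of `E` is absolutely monotone, then `φ z ≤ ‖φ‖ * ‖w‖` whenever
`-w ≤ z ≤ w`, and a Hahn–Banach sandwich argument inserts a linear functional `ψ` with
`φ z ≤ ψ w` for all such pairs and `ψ w ≤ ‖φ‖ * ‖w‖` for all `w`. Thus `-ψ ≤ φ ≤ ψ` and
`‖ψ‖ ≤ ‖φ‖`, so the infimum defining regularity of the dual is even attained.
-/

section Sandwich

variable {V : Type*} [AddCommGroup V] [Module ℝ V]

/-- The epigraph of a sublinear functional `N`, as a pointed cone in `V × ℝ`. It turns upper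
bounds by `N` into positivity conditions, to which the Riesz extension theorem applies. -/
def sublinearEpigraph (N : V → ℝ) (N_hom : ∀ c : ℝ, 0 ≤ c → ∀ x, N (c • x) = c * N x)
    (N_add : ∀ x y, N (x + y) ≤ N x + N y) : PointedCone ℝ (V × ℝ) where
  carrier := {p | N p.1 ≤ p.2}
  zero_mem' := by simpa using (N_hom 0 le_rfl 0).le
  add_mem' hp hq := (N_add _ _).trans (add_le_add hp hq)
  smul_mem' c p hp := (N_hom c c.2 p.1).trans_le (mul_le_mul_of_nonneg_left hp c.2)

theorem exists_linearMap_le_sublinear_of_cone (N : V → ℝ)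
    (N_hom : ∀ c : ℝ, 0 ≤ c → ∀ x, N (c • x) = c * N x)
    (N_add : ∀ x y, N (x + y) ≤ N x + N y) (P : PointedCone ℝ (V × ℝ))
    (hP : ∀ p ∈ P, p.2 ≤ N p.1) :
    ∃ g : V →ₗ[ℝ] ℝ, (∀ x, g x ≤ N x) ∧ ∀ p ∈ P, p.2 ≤ g p.1 := by
  let epi := sublinearEpigraph N N_hom N_add
  let s : PointedCone ℝ (V × ℝ) := epi ⊔ P.map (-LinearMap.id)
  let f := (LinearMap.snd ℝ V ℝ).toPMap (LinearMap.ker (LinearMap.fst ℝ V ℝ))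
  have epi_le : epi ≤ s := le_sup_left
  have neg_mem : ∀ p ∈ P, -p ∈ s := fun p hp ↦
    Submodule.mem_sup_right (PointedCone.mem_map.2 ⟨p, hp, rfl⟩)
  have f_nonneg : ∀ x : f.domain, (x : V × ℝ) ∈ s → 0 ≤ f x := by
    rintro ⟨x, hx : x.1 = 0⟩ hxs
    obtain ⟨q, hq : N q.1 ≤ q.2, _, ⟨p, hp, rfl⟩, rfl⟩ := Submodule.mem_sup.1 hxs
    have fst_eq : q.1 = p.1 := sub_eq_zero.1 (by simpa [sub_eq_add_neg] using hx)
    have snd_le : p.2 ≤ q.2 := (hP p hp).trans (fst_eq ▸ hq)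
    simpa [f] using snd_le
  have f_dense : ∀ y, ∃ x : f.domain, (x : V × ℝ) + y ∈ s := fun y ↦
    ⟨⟨(0, N y.1 - y.2), rfl⟩, epi_le (by simp [epi, sublinearEpigraph])⟩
  obtain ⟨G, G_eq, G_nonneg⟩ := riesz_extension s f f_nonneg f_dense
  have G_apply (x : V) (t : ℝ) : G (x, t) = G (x, 0) + t := by
    have G_zero : G (0, t) = t := G_eq ⟨(0, t), rfl⟩
    rw [← G_zero, ← map_add, G_zero, Prod.mk_add_mk, add_zero, zero_add]
  refine ⟨-(G ∘ₗ LinearMap.inl ℝ V ℝ), fun x ↦ ?_, fun p hp ↦ ?_⟩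
  · have := G_nonneg (x, N x) (epi_le (le_refl (N x)))
    rw [G_apply] at this
    simpa using neg_le_iff_add_nonneg'.2 this
  · have := G_nonneg (-p) (neg_mem p hp)
    rw [map_neg, ← Prod.mk.eta (p := p), G_apply] at this
    simpa using show p.2 ≤ -G (p.1, 0) by linarith

end Sandwich

section OrderedNormedSpace

variable {E : Type*} [NormedAddCommGroup E] [PartialOrder E]

variable (E) in
/-- The norm of `E` is absolutely monotone: it is monotone along `-y ≤ x ≤ y`, the substitute
for `|x| ≤ y` in the absence of a lattice structure. -/
def AbsolutelyMonotoneNorm : Prop :=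
  ∀ ⦃x y : E⦄, -y ≤ x → x ≤ y → ‖x‖ ≤ ‖y‖

variable (E) in
/-- `E` is approximately absolutely dominated: each `x` satisfies `-y ≤ x ≤ y` for some `y` whose
norm exceeds that of `x` by arbitrarily little. -/
def ApproxAbsolutelyDominated : Prop :=
  ∀ ⦃x : E⦄ ⦃r : ℝ⦄, ‖x‖ < r → ∃ y : E, -y ≤ x ∧ x ≤ y ∧ ‖y‖ < r

theorem absolutelyMonotoneNorm_of_norm_eq_sInf
    (hreg : ∀ x : E, ‖x‖ = sInf {r : ℝ | ∃ y : E, -y ≤ x ∧ x ≤ y ∧ r = ‖y‖}) :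
    AbsolutelyMonotoneNorm E := by
  intro x y hneg hle
  rw [hreg x]
  refine csInf_le ⟨0, ?_⟩ ⟨y, hneg, hle, rfl⟩
  rintro _ ⟨z, -, -, rfl⟩
  exact norm_nonneg z

theorem approxAbsolutelyDominated_of_norm_eq_sInf [IsOrderedAddMonoid E]
    (hgen : ∀ x : E, ∃ u v : E, 0 ≤ u ∧ 0 ≤ v ∧ x = u - v)
    (hreg : ∀ x : E, ‖x‖ = sInf {r : ℝ | ∃ y : E, -y ≤ x ∧ x ≤ y ∧ r = ‖y‖}) :
    ApproxAbsolutelyDominated E := by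
  intro x r hr
  have nonempty : {r : ℝ | ∃ y : E, -y ≤ x ∧ x ≤ y ∧ r = ‖y‖}.Nonempty := by
    obtain ⟨u, v, hu, hv, rfl⟩ := hgen x
    have neg_le : -(u + v) ≤ u - v := by
      rw [neg_add, ← sub_eq_add_neg]
      exact sub_le_sub_right (neg_le_self hu) v
    have le_add : u - v ≤ u + v := (sub_le_self u hv).trans (le_add_of_nonneg_right hv)
    exact ⟨_, u + v, neg_le, le_add, rfl⟩
  obtain ⟨_, ⟨y, hneg, hle, rfl⟩, hlt⟩ := exists_lt_of_csInf_lt nonempty ((hreg x).symm.trans_lt hr)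
  exact ⟨y, hneg, hle, hlt⟩

variable [NormedSpace ℝ E]

variable (E) in
/-- The pairs `(z, w)` with `-w ≤ z ≤ w`, as a pointed cone in `E × E`. Its image under
`(z, w) ↦ (w, φ z)` is the lower constraint when sandwiching a functional that dominates `φ`. -/
def absDominationCone [IsOrderedAddMonoid E] [PosSMulMono ℝ E] : PointedCone ℝ (E × E) where
  carrier := {p | -p.2 ≤ p.1 ∧ p.1 ≤ p.2}
  zero_mem' := by simp
  add_mem' hp hq := ⟨(neg_add _ _).trans_le (add_le_add hp.1 hq.1), add_le_add hp.2 hq.2⟩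
  smul_mem' c p hp :=
    ⟨(smul_neg (c : ℝ) p.2).ge.trans (smul_le_smul_of_nonneg_left hp.1 c.2),
      smul_le_smul_of_nonneg_left hp.2 c.2⟩

theorem isClosed_dualPosCone : IsClosed (dualPosCone E) := by
  simp only [dualPosCone, Set.ofPred_forall]
  exact isClosed_iInter fun x ↦ isClosed_iInter fun _ ↦
    isClosed_le continuous_const (ContinuousLinearMap.apply ℝ ℝ x).continuous

theorem add_mem_dualPosCone {φ ψ : E →L[ℝ] ℝ} (hφ : φ ∈ dualPosCone E)
    (hψ : ψ ∈ dualPosCone E) : φ + ψ ∈ dualPosCone E :=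
  fun x hx ↦ add_nonneg (hφ x hx) (hψ x hx)

theorem eq_zero_of_mem_dualPosCone_of_neg_mem
    (hgen : ∀ x : E, ∃ u v : E, 0 ≤ u ∧ 0 ≤ v ∧ x = u - v) {φ : E →L[ℝ] ℝ}
    (hφ : φ ∈ dualPosCone E) (hneg : -φ ∈ dualPosCone E) : φ = 0 := by
  have apply_eq_zero : ∀ x : E, 0 ≤ x → φ x = 0 := fun x hx ↦
    le_antisymm (neg_nonneg.1 (hneg x hx)) (hφ x hx)
  ext x
  obtain ⟨u, v, hu, hv, rfl⟩ := hgen x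
  simp [apply_eq_zero u hu, apply_eq_zero v hv]

theorem mem_dualPosCone_of_add_mem_of_sub_mem {φ ψ : E →L[ℝ] ℝ}
    (hadd : φ + ψ ∈ dualPosCone E) (hsub : ψ - φ ∈ dualPosCone E) : ψ ∈ dualPosCone E := by
  intro x hx
  have h_add : 0 ≤ φ x + ψ x := hadd x hx
  have h_sub : 0 ≤ ψ x - φ x := hsub x hx
  linarith

variable [IsOrderedAddMonoid E]

theorem abs_apply_le_of_add_mem_of_sub_mem_dualPosCone {φ ψ : E →L[ℝ] ℝ}
    (hadd : φ + ψ ∈ dualPosCone E) (hsub : ψ - φ ∈ dualPosCone E) {x y : E}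
    (hneg : -y ≤ x) (hle : x ≤ y) : |φ x| ≤ ψ y := by
  have hadd_nonneg : 0 ≤ y + x := neg_le_iff_add_nonneg'.1 hneg
  have hsub_nonneg : 0 ≤ y - x := sub_nonneg.2 hle
  have add_add := hadd _ hadd_nonneg
  have add_sub := hadd _ hsub_nonneg
  have sub_add := hsub _ hadd_nonneg
  have sub_sub := hsub _ hsub_nonneg
  simp only [add_apply, sub_apply, map_add, map_sub] at add_add add_sub sub_add sub_sub
  exact abs_le.2 ⟨by linarith, by linarith⟩

theorem ApproxAbsolutelyDominated.norm_le_norm_of_add_mem_of_sub_mem_dualPosCone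
    (hE : ApproxAbsolutelyDominated E) {φ ψ : E →L[ℝ] ℝ}
    (hadd : φ + ψ ∈ dualPosCone E) (hsub : ψ - φ ∈ dualPosCone E) : ‖φ‖ ≤ ‖ψ‖ := by
  rw [← φ.sSup_unit_ball_eq_norm]
  refine csSup_le ((Metric.nonempty_ball.2 one_pos).image _) ?_
  rintro _ ⟨x, hx, rfl⟩
  obtain ⟨y, hneg, hle, hy⟩ := hE (mem_ball_zero_iff.1 hx)
  calc |φ x| ≤ ψ y := abs_apply_le_of_add_mem_of_sub_mem_dualPosCone hadd hsub hneg hle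
    _ ≤ ‖ψ y‖ := le_abs_self _
    _ ≤ ‖ψ‖ := ψ.unit_le_opNorm y hy.le

variable [PosSMulMono ℝ E]

theorem AbsolutelyMonotoneNorm.exists_linearMap_sandwich (hE : AbsolutelyMonotoneNorm E)
    (φ : E →L[ℝ] ℝ) :
    ∃ g : E →ₗ[ℝ] ℝ, (∀ w, g w ≤ ‖φ‖ * ‖w‖) ∧ ∀ z w, -w ≤ z → z ≤ w → φ z ≤ g w := by
  let P : PointedCone ℝ (E × ℝ) := (absDominationCone E).map
    ((LinearMap.snd ℝ E E).prod (φ.toLinearMap ∘ₗ LinearMap.fst ℝ E E))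
  have apply_le : ∀ p ∈ P, p.2 ≤ ‖φ‖ * ‖p.1‖ := by
    rintro _ ⟨⟨z, w⟩, ⟨hneg, hle⟩, rfl⟩
    calc φ z ≤ ‖φ z‖ := le_abs_self _
      _ ≤ ‖φ‖ * ‖z‖ := φ.le_opNorm z
      _ ≤ ‖φ‖ * ‖w‖ := mul_le_mul_of_nonneg_left (hE hneg hle) (norm_nonneg φ)
  obtain ⟨g, g_le, le_g⟩ := exists_linearMap_le_sublinear_of_cone (fun w ↦ ‖φ‖ * ‖w‖)
    (fun c hc w ↦ by rw [norm_smul, Real.norm_of_nonneg hc, mul_left_comm])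
    (fun v w ↦ (mul_le_mul_of_nonneg_left (norm_add_le v w) (norm_nonneg φ)).trans_eq
      (mul_add _ _ _)) P apply_le
  exact ⟨g, g_le, fun z w hneg hle ↦ le_g (w, φ z) ⟨(z, w), ⟨hneg, hle⟩, rfl⟩⟩

theorem AbsolutelyMonotoneNorm.exists_dual_dominator (hE : AbsolutelyMonotoneNorm E)
    (φ : E →L[ℝ] ℝ) :
    ∃ ψ : E →L[ℝ] ℝ, φ + ψ ∈ dualPosCone E ∧ ψ - φ ∈ dualPosCone E ∧ ‖ψ‖ ≤ ‖φ‖ := by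
  obtain ⟨g, g_le, le_g⟩ := hE.exists_linearMap_sandwich φ
  have norm_g_le (w : E) : ‖g w‖ ≤ ‖φ‖ * ‖w‖ :=
    abs_le'.2 ⟨g_le w, by simpa using g_le (-w)⟩
  refine ⟨g.mkContinuous ‖φ‖ norm_g_le, fun x hx ↦ ?_, fun x hx ↦ ?_,
    g.mkContinuous_norm_le (norm_nonneg φ) norm_g_le⟩
  · have : -φ x ≤ g x := by simpa using le_g (-x) x le_rfl (neg_le_self hx)
    simpa using neg_le_iff_add_nonneg'.1 this
  · have : φ x ≤ g x := le_g x x (neg_le_self hx) le_rfl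
    simpa using this

end OrderedNormedSpace

theorem dual_regularly_ordered_of_regular_general
    {E : Type*} [NormedAddCommGroup E] [NormedSpace ℝ E] [PartialOrder E]
    [IsOrderedAddMonoid E] [PosSMulMono ℝ E]
    (hgen : ∀ x : E, ∃ u v : E, 0 ≤ u ∧ 0 ≤ v ∧ x = u - v)
    (hreg : ∀ x : E, ‖x‖ = sInf {r : ℝ | ∃ y : E, -y ≤ x ∧ x ≤ y ∧ r = ‖y‖}) :
    IsClosed (dualPosCone E) ∧
    (∀ φ : E →L[ℝ] ℝ, φ ∈ dualPosCone E → -φ ∈ dualPosCone E → φ = 0) ∧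
    (∀ φ : E →L[ℝ] ℝ, ∃ ψ χ : E →L[ℝ] ℝ,
      ψ ∈ dualPosCone E ∧ χ ∈ dualPosCone E ∧ φ = ψ - χ) ∧
    (∀ φ ψ : E →L[ℝ] ℝ, φ ∈ dualPosCone E → ψ - φ ∈ dualPosCone E → ‖φ‖ ≤ ‖ψ‖) ∧
    (∀ φ : E →L[ℝ] ℝ, ‖φ‖ = sInf {r : ℝ | ∃ ψ : E →L[ℝ] ℝ,
      φ + ψ ∈ dualPosCone E ∧ ψ - φ ∈ dualPosCone E ∧ r = ‖ψ‖}) := by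
  have hmono := absolutelyMonotoneNorm_of_norm_eq_sInf hreg
  have hdom := approxAbsolutelyDominated_of_norm_eq_sInf hgen hreg
  refine ⟨isClosed_dualPosCone, fun φ ↦ eq_zero_of_mem_dualPosCone_of_neg_mem hgen,
    fun φ ↦ ?_, fun φ ψ hφ hsub ↦ ?_, fun φ ↦ ?_⟩
  · obtain ⟨ψ, hadd, hsub, -⟩ := hmono.exists_dual_dominator φ
    exact ⟨φ + ψ, ψ, hadd, mem_dualPosCone_of_add_mem_of_sub_mem hadd hsub,
      (add_sub_cancel_right φ ψ).symm⟩
  · have hψ : ψ ∈ dualPosCone E := by simpa using add_mem_dualPosCone hφ hsub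
    exact hdom.norm_le_norm_of_add_mem_of_sub_mem_dualPosCone (add_mem_dualPosCone hφ hψ) hsub
  · obtain ⟨ψ, hadd, hsub, hle⟩ := hmono.exists_dual_dominator φ
    have norm_eq : ‖φ‖ = ‖ψ‖ :=
      (hdom.norm_le_norm_of_add_mem_of_sub_mem_dualPosCone hadd hsub).antisymm hle
    refine Eq.symm (IsLeast.csInf_eq ⟨⟨ψ, hadd, hsub, norm_eq⟩, ?_⟩)
    rintro _ ⟨χ, hadd', hsub', rfl⟩
    exact hdom.norm_le_norm_of_add_mem_of_sub_mem_dualPosCone hadd' hsub'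

/-- The dual of a regularly ordered Banach space, equipped with the dual cone, is again a
regularly ordered Banach space: the dual cone is closed, proper and generating, the dual
order is compatible with the norm, and the dual norm is regular. -/
theorem dual_regularly_ordered_of_regular
    {E : Type*} [NormedAddCommGroup E] [NormedSpace ℝ E] [CompleteSpace E] [PartialOrder E]
    (hadd : ∀ x y z : E, x ≤ y → x + z ≤ y + z)
    (hsmul : ∀ (c : ℝ) (x y : E), 0 ≤ c → x ≤ y → c • x ≤ c • y)
    (hclosed : IsClosed {x : E | 0 ≤ x})
    (hgen : ∀ x : E, ∃ u v : E, 0 ≤ u ∧ 0 ≤ v ∧ x = u - v)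
    (hnormmono : ∀ x y : E, 0 ≤ x → x ≤ y → ‖x‖ ≤ ‖y‖)
    (hreg : ∀ x : E, ‖x‖ = sInf {r : ℝ | ∃ y : E, -y ≤ x ∧ x ≤ y ∧ r = ‖y‖}) :
    -- the dual cone is closed
    IsClosed (dualPosCone E) ∧
    -- the dual cone is proper
    (∀ φ : E →L[ℝ] ℝ, φ ∈ dualPosCone E → -φ ∈ dualPosCone E → φ = 0) ∧
    -- the dual cone is generating
    (∀ φ : E →L[ℝ] ℝ, ∃ ψ χ : E →L[ℝ] ℝ,
      ψ ∈ dualPosCone E ∧ χ ∈ dualPosCone E ∧ φ = ψ - χ) ∧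
    -- `0 ≤ φ ≤ ψ` in the dual order implies `‖φ‖ ≤ ‖ψ‖`
    (∀ φ ψ : E →L[ℝ] ℝ, φ ∈ dualPosCone E → ψ - φ ∈ dualPosCone E → ‖φ‖ ≤ ‖ψ‖) ∧
    -- the dual norm is regular
    (∀ φ : E →L[ℝ] ℝ, ‖φ‖ = sInf {r : ℝ | ∃ ψ : E →L[ℝ] ℝ,
      φ + ψ ∈ dualPosCone E ∧ ψ - φ ∈ dualPosCone E ∧ r = ‖ψ‖}) := by
  have : IsOrderedAddMonoid E := { add_le_add_left x y hxy z := hadd x y z hxy }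
  have : PosSMulMono ℝ E := ⟨fun c hc x y hxy ↦ hsmul c x y hc hxy⟩
  exact dual_regularly_ordered_of_regular_general hgen hreg
end

section
/- Every separable ordered Banach space E contains a strictly positive element, that is, an element x ∈ E₊ such that φ(x) > 0 for every nonzero continuous linear functional φ ∈ E*₊. -/
/-!
Scale a countable dense subset of the cone by positive weights so that its sum converges. A positive
functional that vanishes at the sum vanishes at every term, hence on the closed linear span of the
terms, which is the whole space.
-/

open TopologicalSpace Submodule

theorem exists_ne_zero_of_dense_span {R M N : Type*} [Semiring R] [AddCommMonoid M] [Module R M]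
    [TopologicalSpace M] [AddCommMonoid N] [Module R N] [TopologicalSpace N] [T2Space N]
    {s : Set M} (hs : Dense (span R s : Set M)) {f : M →L[R] N} (hf : f ≠ 0) :
    ∃ x ∈ s, f x ≠ 0 := by
  contrapose! hf
  exact ContinuousLinearMap.ext_on hs hf

theorem exists_countable_subset_dense_span {R M : Type*} [Semiring R] [AddCommMonoid M] [Module R M]
    [TopologicalSpace M] [PseudoMetrizableSpace M] [ContinuousAdd M] [ContinuousConstSMul R M]
    {s : Set M} (hsep : IsSeparable s) (hs : Dense (span R s : Set M)) :
    ∃ t ⊆ s, t.Countable ∧ Dense (span R t : Set M) := by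
  obtain ⟨t, hts, ht_count, hst⟩ := hsep.exists_countable_dense_subset
  have hspan : span R s ≤ (span R t).topologicalClosure :=
    span_le.2 (hst.trans (closure_mono subset_span))
  exact ⟨t, hts, ht_count, dense_closure.1 (hs.mono hspan)⟩

theorem span_eq_top_of_forall_eq_sub {R M : Type*} [Ring R] [AddCommGroup M] [Module R M]
    {s : Set M} (h : ∀ x, ∃ u v, u ∈ s ∧ v ∈ s ∧ x = u - v) : span R s = ⊤ := by
  refine eq_top_iff'.2 fun x ↦ ?_
  obtain ⟨u, v, hu, hv, rfl⟩ := h x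
  exact sub_mem (subset_span hu) (subset_span hv)

section Seminormed

variable {ι E : Type*} [SeminormedAddCommGroup E] [NormedSpace ℝ E] [CompleteSpace E]

theorem exists_pos_summable_smul [Countable ι] (u : ι → E) :
    ∃ c : ι → ℝ, (∀ i, 0 < c i) ∧ Summable fun i ↦ c i • u i := by
  obtain ⟨δ, hδ_pos, _, hδ_sum, -⟩ := NNReal.exists_pos_sum_of_countable one_ne_zero ι
  have hδ : ∀ i, (0 : ℝ) < δ i := hδ_pos
  have hc : ∀ i, 0 < δ i / (1 + ‖u i‖) := fun i ↦ div_pos (hδ i) (by positivity)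
  refine ⟨fun i ↦ δ i / (1 + ‖u i‖), hc,
    .of_norm_bounded (NNReal.summable_coe.2 hδ_sum.summable) fun i ↦ ?_⟩
  calc ‖(δ i / (1 + ‖u i‖)) • u i‖
      = δ i * (‖u i‖ / (1 + ‖u i‖)) := by
        rw [norm_smul, Real.norm_of_nonneg (hc i).le, div_mul_eq_mul_div, mul_div_assoc]
    _ ≤ δ i := mul_le_of_le_one_right (hδ i).le (div_le_one_of_le₀ (by simp) (by positivity))

theorem exists_mem_forall_pos_of_exists_ne_zero [Countable ι] (C : ProperCone ℝ E) {u : ι → E}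
    (hu : ∀ i, u i ∈ C) :
    ∃ x ∈ C, ∀ φ : E →L[ℝ] ℝ, (∀ z ∈ C, 0 ≤ φ z) → (∃ i, φ (u i) ≠ 0) → 0 < φ x := by
  obtain ⟨c, hc, hsum⟩ := exists_pos_summable_smul u
  have hmem : ∀ i, c i • u i ∈ C := fun i ↦ C.smul_mem (hu i) (hc i).le
  refine ⟨∑' i, c i • u i, tsum_mem C.isClosed hmem, fun φ hφ ⟨i, hi⟩ ↦ ?_⟩
  have hpos : 0 < φ (c i • u i) := by
    rw [map_smul]
    exact smul_pos (hc i) ((hφ _ (hu i)).lt_of_ne' hi)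
  rw [φ.map_tsum hsum]
  exact (φ.summable hsum).tsum_pos (fun j ↦ hφ _ (hmem j)) i hpos

theorem exists_strictly_positive_of_separable_general [SeparableSpace E]
    (C : ProperCone ℝ E) (hC : Dense (span ℝ (C : Set E) : Set E)) :
    ∃ x ∈ C, ∀ φ : E →L[ℝ] ℝ, (∀ z ∈ C, 0 ≤ φ z) → φ ≠ 0 → 0 < φ x := by
  obtain ⟨D, hDC, hD_count, hD⟩ := exists_countable_subset_dense_span (.of_separableSpace _) hC
  have := hD_count.to_subtype
  obtain ⟨x, hx, hpos⟩ := exists_mem_forall_pos_of_exists_ne_zero C fun d : D ↦ hDC d.2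
  refine ⟨x, hx, fun φ hφ hne ↦ hpos φ hφ ?_⟩
  obtain ⟨d, hd, hφd⟩ := exists_ne_zero_of_dense_span hD hne
  exact ⟨⟨d, hd⟩, hφd⟩

end Seminormed

/-- Every separable ordered Banach space contains a strictly positive element, i.e. an
element `x ≥ 0` with `φ x > 0` for every nonzero positive continuous linear functional `φ`. -/
theorem exists_strictly_positive_of_separable
    {E : Type*} [NormedAddCommGroup E] [NormedSpace ℝ E] [CompleteSpace E] [PartialOrder E]
    [TopologicalSpace.SeparableSpace E]
    (hadd : ∀ x y z : E, x ≤ y → x + z ≤ y + z)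
    (hsmul : ∀ (c : ℝ) (x y : E), 0 ≤ c → x ≤ y → c • x ≤ c • y)
    (hclosed : IsClosed {x : E | 0 ≤ x})
    (hgen : ∀ x : E, ∃ u v : E, 0 ≤ u ∧ 0 ≤ v ∧ x = u - v)
    (hnormmono : ∀ x y : E, 0 ≤ x → x ≤ y → ‖x‖ ≤ ‖y‖) :
    ∃ x : E, 0 ≤ x ∧ ∀ φ : E →L[ℝ] ℝ,
      (∀ z : E, 0 ≤ z → 0 ≤ φ z) → φ ≠ 0 → 0 < φ x := by
  have : IsOrderedAddMonoid E := { add_le_add_left := fun x y h z ↦ hadd x y z h }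
  have : PosSMulMono ℝ E := ⟨fun c hc x y h ↦ hsmul c x y hc h⟩
  have : OrderClosedTopology E := ⟨isClosed_le_of_isClosed_nonneg hclosed⟩
  have hspan : span ℝ (ProperCone.positive ℝ E : Set E) = ⊤ := span_eq_top_of_forall_eq_sub hgen
  exact exists_strictly_positive_of_separable_general (.positive ℝ E) (hspan ▸ dense_univ)
end

section
/- Let K be a compact subset of ℝ^N, X a compact Hausdorff space, and T, A : C(K) → C(X) weakly nonlinear and monotone operators. Fix α ≥ α(K,u), and set p = Σ_{k=1}^N (pr_k + α)² ∈ C(K) and q_k = −pr_k − α ∈ C(K) for k = 1,…,N. Then for every f ∈ C(K) and every ε > 0 there exists δ > 0 such that, pointwise on X, |T(f)·A(1) − T(1)·A(f)| ≤ ε·T(1)·A(1) + δ·{ A(1)·[T(p) − A(p)] + A(p)·[T(1) − A(1)] + 2·[A(1)·A(p) − Σ_{k=1}^N (A(q_k))²] + 2·Σ_{k=1}^N A(q_k)·[A(q_k) − T(q_k)] }. -/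
/-- The restriction to `K ⊆ ℝ^N` of the `k`-th coordinate projection, as a continuous map. -/
noncomputable def coordCM {N : ℕ} (K : Set (EuclideanSpace ℝ (Fin N))) (k : Fin N) : C(K, ℝ) :=
  ⟨fun x => (x : EuclideanSpace ℝ (Fin N)) k,
    (EuclideanSpace.proj k).continuous.comp continuous_subtype_val⟩

/-- The deficit of positivity `α(K, u)` of `K ⊆ ℝ^N` in the direction `u = (1, …, 1)`:
the infimum of all `α ≥ 0` with `K + αu ⊆ ℝ₊^N`. -/
noncomputable def posDeficit {N : ℕ} (K : Set (EuclideanSpace ℝ (Fin N))) : ℝ :=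
  sInf {a : ℝ | 0 ≤ a ∧ ∀ x ∈ K, ∀ k : Fin N, 0 ≤ x k + a}

/-- `p = Σ_{k=1}^N (pr_k + α)²` as an element of `C(K)`. -/
noncomputable def testP {N : ℕ} (K : Set (EuclideanSpace ℝ (Fin N))) (α : ℝ) : C(K, ℝ) :=
  ∑ k : Fin N, (coordCM K k + ContinuousMap.const K α) ^ 2

/-- `q_k = −pr_k − α` as an element of `C(K)`. -/
noncomputable def testQ {N : ℕ} (K : Set (EuclideanSpace ℝ (Fin N))) (α : ℝ) (k : Fin N) :
    C(K, ℝ) :=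
  -(coordCM K k) - ContinuousMap.const K α

/-!
Bound `|f x - f y|` by `ε + δ * ∑ k, (q k x - q k y) ^ 2`, and expand the square as
`p x + p y - 2 * ∑ k, q k y * q k x` with `p = ∑ k, q k ^ 2`. For fixed `y` this is a combination of
`1`, `p` and the `q k` in the variable `x` whose coefficients `-2 * q k y` are nonnegative because
`q k ≤ 0`, so `T` may be applied term by term. The result, as a function of `y`, is again a
combination of `1`, `p` and the `q k`, now with coefficients `-2 * T (q k) ≥ 0`, so `A` may be
applied in the same way.
-/

/-- Monotone weakly nonlinear operators on `C(K)`: sublinear, translatable and monotone. The target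
is any ordered real vector space, so that the operators `C(K) → C(X)` and their point evaluations
`C(K) → ℝ` are both covered. -/
structure IsMonotoneWeaklyNonlinear {K E : Type*} [TopologicalSpace K] [AddCommGroup E]
    [Module ℝ E] [Preorder E] (T : C(K, ℝ) → E) : Prop where
  map_add_le : ∀ f g : C(K, ℝ), T (f + g) ≤ T f + T g
  map_smul : ∀ a : ℝ, 0 ≤ a → ∀ f : C(K, ℝ), T (a • f) = a • T f
  map_add_smul_one : ∀ f : C(K, ℝ), ∀ a : ℝ, 0 ≤ a → T (f + a • 1) = T f + a • T 1
  monotone : Monotone T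

namespace IsMonotoneWeaklyNonlinear

section Preorder

variable {K E : Type*} [TopologicalSpace K] [AddCommGroup E] [Module ℝ E] [Preorder E]
  {T : C(K, ℝ) → E}

theorem map_zero (hT : IsMonotoneWeaklyNonlinear T) : T 0 = 0 := by
  simpa using hT.map_smul 0 le_rfl 0

theorem map_nonneg (hT : IsMonotoneWeaklyNonlinear T) {f : C(K, ℝ)} (hf : 0 ≤ f) : 0 ≤ T f :=
  hT.map_zero ▸ hT.monotone hf

theorem map_nonpos (hT : IsMonotoneWeaklyNonlinear T) {f : C(K, ℝ)} (hf : f ≤ 0) : T f ≤ 0 :=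
  hT.map_zero ▸ hT.monotone hf

theorem map_smul_one (hT : IsMonotoneWeaklyNonlinear T) (c : ℝ) : T (c • 1) = c • T 1 := by
  rcases le_total 0 c with hc | hc
  · exact hT.map_smul c hc 1
  · have translate : T (c • 1 + -c • 1) = T (c • 1) + -c • T 1 :=
      hT.map_add_smul_one _ _ (neg_nonneg.2 hc)
    rw [← add_smul, add_neg_cancel, zero_smul, hT.map_zero, neg_smul] at translate
    exact add_neg_eq_zero.1 translate.symm

theorem map_combination_le [IsOrderedAddMonoid E] (hT : IsMonotoneWeaklyNonlinear T)
    {ι : Type*} [Fintype ι] (p : C(K, ℝ)) (q : ι → C(K, ℝ)) (c : ℝ) {s : ℝ} (hs : 0 ≤ s)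
    {w : ι → ℝ} (hw : ∀ k, 0 ≤ w k) :
    T (c • 1 + s • p + ∑ k, w k • q k) ≤ c • T 1 + s • T p + ∑ k, w k • T (q k) :=
  calc T (c • 1 + s • p + ∑ k, w k • q k)
      ≤ T (c • 1) + T (s • p) + ∑ k, T (w k • q k) :=
        (hT.map_add_le _ _).trans (add_le_add (hT.map_add_le _ _)
          (Finset.le_sum_of_subadditive T hT.map_zero.le hT.map_add_le _ _))
    _ = c • T 1 + s • T p + ∑ k, w k • T (q k) := by
        simp only [hT.map_smul_one, hT.map_smul s hs, hT.map_smul (w _) (hw _)]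

theorem eval {X : Type*} [TopologicalSpace X] {T : C(K, ℝ) → C(X, ℝ)}
    (hT : IsMonotoneWeaklyNonlinear T) (t : X) : IsMonotoneWeaklyNonlinear fun g => T g t where
  map_add_le f g := hT.map_add_le f g t
  map_smul a ha f := DFunLike.congr_fun (hT.map_smul a ha f) t
  map_add_smul_one f a ha := DFunLike.congr_fun (hT.map_add_smul_one f a ha) t
  monotone _ _ hfg := hT.monotone hfg t

end Preorder

theorem abs_map_sub_map_le {K E : Type*} [TopologicalSpace K] [AddCommGroup E] [Module ℝ E]
    [Lattice E] [IsOrderedAddMonoid E] {T : C(K, ℝ) → E} (hT : IsMonotoneWeaklyNonlinear T)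
    {f g h : C(K, ℝ)} (hfg : ∀ x, |f x - g x| ≤ h x) : |T f - T g| ≤ T h := by
  have hf : f ≤ h + g := fun x => sub_le_iff_le_add.1 (abs_sub_le_iff.1 (hfg x)).1
  have hg : g ≤ h + f := fun x => sub_le_iff_le_add.1 (abs_sub_le_iff.1 (hfg x)).2
  rw [abs_le', neg_sub, sub_le_iff_le_add, sub_le_iff_le_add]
  exact ⟨(hT.monotone hf).trans (hT.map_add_le h g), (hT.monotone hg).trans (hT.map_add_le h f)⟩

section Functional

variable {K ι : Type*} [TopologicalSpace K] [Fintype ι] {T A : C(K, ℝ) → ℝ} {f p : C(K, ℝ)}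
  {q : ι → C(K, ℝ)}

theorem abs_map_sub_map_le_combination (hT : IsMonotoneWeaklyNonlinear T) {g : C(K, ℝ)}
    {c s r : ℝ} (hs : 0 ≤ s) (hr : 0 ≤ r) {v : ι → ℝ} (hv : ∀ k, v k ≤ 0)
    (hfg : ∀ x, |f x - g x| ≤ c + s * p x - r * ∑ k, v k * q k x) :
    |T f - T g| ≤ c * T 1 + s * T p - r * ∑ k, v k * T (q k) := by
  have weight_nonneg (k : ι) : 0 ≤ r * -v k := mul_nonneg hr (neg_nonneg.2 (hv k))
  have sum_weight (u : ι → ℝ) : ∑ k, r * -v k * u k = -(r * ∑ k, v k * u k) := by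
    simp only [Finset.mul_sum, ← Finset.sum_neg_distrib, mul_neg, neg_mul, mul_assoc]
  calc |T f - T g| ≤ T (c • 1 + s • p + ∑ k, (r * -v k) • q k) :=
        hT.abs_map_sub_map_le fun x => by
          simpa [Finset.mul_sum, mul_assoc, sub_eq_add_neg] using hfg x
    _ ≤ c • T 1 + s • T p + ∑ k, (r * -v k) • T (q k) :=
        hT.map_combination_le p q c hs weight_nonneg
    _ = c * T 1 + s * T p - r * ∑ k, v k * T (q k) := by
        simp only [smul_eq_mul, sum_weight, ← sub_eq_add_neg]

theorem abs_map_sub_apply_mul_map_one_le (hT : IsMonotoneWeaklyNonlinear T) (hq : ∀ k, q k ≤ 0)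
    {ε δ : ℝ} (hδ : 0 ≤ δ) (y : K)
    (hf : ∀ x, |f x - f y| ≤ ε + δ * (p x + p y - 2 * ∑ k, q k y * q k x)) :
    |T f - f y * T 1| ≤ ε * T 1 + δ * (T p + p y * T 1 - 2 * ∑ k, q k y * T (q k)) :=
  calc |T f - f y * T 1| = |T f - T (f y • 1)| := by rw [hT.map_smul_one, smul_eq_mul]
    _ ≤ (ε + δ * p y) * T 1 + δ * T p - 2 * δ * ∑ k, q k y * T (q k) := by
        refine hT.abs_map_sub_map_le_combination hδ (by positivity) (fun k => hq k y) fun x => ?_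
        rw [ContinuousMap.smul_apply, ContinuousMap.one_apply, smul_eq_mul, mul_one]
        linarith [hf x]
    _ = ε * T 1 + δ * (T p + p y * T 1 - 2 * ∑ k, q k y * T (q k)) := by ring

theorem abs_map_mul_map_one_sub_le (hT : IsMonotoneWeaklyNonlinear T)
    (hA : IsMonotoneWeaklyNonlinear A) (hq : ∀ k, q k ≤ 0) {ε δ : ℝ} (hδ : 0 ≤ δ)
    (hf : ∀ x y, |f x - f y| ≤ ε + δ * (p x + p y - 2 * ∑ k, q k y * q k x)) :
    |T f * A 1 - T 1 * A f| ≤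
      ε * (T 1 * A 1) + δ * (T p * A 1 + T 1 * A p - 2 * ∑ k, T (q k) * A (q k)) := by
  have map_one_nonneg : 0 ≤ T 1 := hT.map_nonneg zero_le_one
  have bound_apply (y : K) : |T f - T 1 * f y| ≤
      ε * T 1 + δ * T p + δ * T 1 * p y - 2 * δ * ∑ k, T (q k) * q k y := by
    have := hT.abs_map_sub_apply_mul_map_one_le hq hδ y fun x => hf x y
    simp only [mul_comm (T _)]
    linarith
  calc |T f * A 1 - T 1 * A f| = |A (T f • 1) - A (T 1 • f)| := by
        rw [hA.map_smul_one, hA.map_smul _ map_one_nonneg, smul_eq_mul, smul_eq_mul]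
    _ ≤ (ε * T 1 + δ * T p) * A 1 + δ * T 1 * A p - 2 * δ * ∑ k, T (q k) * A (q k) :=
        hA.abs_map_sub_map_le_combination (by positivity) (by positivity)
          (fun k => hT.map_nonpos (hq k)) fun y => by simpa using bound_apply y
    _ = ε * (T 1 * A 1) + δ * (T p * A 1 + T 1 * A p - 2 * ∑ k, T (q k) * A (q k)) := by ring

end Functional

end IsMonotoneWeaklyNonlinear

theorem exists_pos_forall_le_add_mul {Z : Type*} [TopologicalSpace Z] [CompactSpace Z]
    {g d : Z → ℝ} (hg : Continuous g) (hd : Continuous d) (hd_nonneg : ∀ z, 0 ≤ d z)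
    (hgd : ∀ z, d z = 0 → g z ≤ 0) {ε : ℝ} (hε : 0 < ε) :
    ∃ δ, 0 < δ ∧ ∀ z, g z ≤ ε + δ * d z := by
  have d_pos : ∀ z ∈ {z | ε ≤ g z}, 0 < d z := fun z hz =>
    (hd_nonneg z).lt_of_ne fun h => (hε.trans_le hz).not_ge (hgd z h.symm)
  obtain ⟨m, hm, m_le⟩ :=
    (isClosed_le continuous_const hg).isCompact.exists_forall_le' hd.continuousOn d_pos
  obtain ⟨M, hM⟩ := (isCompact_range hg).bddAbove
  refine ⟨max M 1 / m, by positivity, fun z => ?_⟩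
  rcases le_total (g z) ε with hz | hz
  · have := hd_nonneg z
    exact hz.trans (le_add_of_nonneg_right (by positivity))
  · calc g z ≤ max M 1 := (hM ⟨z, rfl⟩).trans (le_max_left M 1)
      _ = max M 1 / m * m := (div_mul_cancel₀ _ hm.ne').symm
      _ ≤ max M 1 / m * d z := by gcongr; exact m_le z hz
      _ ≤ ε + max M 1 / m * d z := le_add_of_nonneg_left hε.le

theorem exists_abs_sub_le_add_mul_sum_sq {K ι : Type*} [TopologicalSpace K] [CompactSpace K]
    [Fintype ι] (q : ι → C(K, ℝ)) (f : C(K, ℝ))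
    (hf : ∀ x y, (∀ k, q k x = q k y) → f x = f y) {ε : ℝ} (hε : 0 < ε) :
    ∃ δ, 0 < δ ∧ ∀ x y, |f x - f y| ≤ ε + δ * ∑ k, (q k x - q k y) ^ 2 := by
  have vanish (z : K × K) (hz : ∑ k, (q k z.1 - q k z.2) ^ 2 = 0) : |f z.1 - f z.2| ≤ 0 := by
    have sq_eq_zero := (Finset.sum_eq_zero_iff_of_nonneg fun k _ => sq_nonneg _).1 hz
    have eq_apply (k : ι) : q k z.1 = q k z.2 :=
      sub_eq_zero.1 (sq_eq_zero_iff.1 (sq_eq_zero k (Finset.mem_univ k)))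
    rw [hf _ _ eq_apply, sub_self, abs_zero]
  obtain ⟨δ, hδ, bound⟩ := exists_pos_forall_le_add_mul (by fun_prop) (by fun_prop)
    (fun z => by positivity) vanish hε
  exact ⟨δ, hδ, fun x y => bound (x, y)⟩

theorem pointwise_a_priori_estimate_general {K ι : Type*} [TopologicalSpace K] [CompactSpace K]
    [Fintype ι] (q : ι → C(K, ℝ)) (hq : ∀ k, q k ≤ 0) (f : C(K, ℝ))
    (hf : ∀ x y, (∀ k, q k x = q k y) → f x = f y) {ε : ℝ} (hε : 0 < ε) :
    ∃ δ : ℝ, 0 < δ ∧ ∀ T A : C(K, ℝ) → ℝ,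
      IsMonotoneWeaklyNonlinear T → IsMonotoneWeaklyNonlinear A →
      |T f * A 1 - T 1 * A f| ≤
        ε * (T 1 * A 1) +
        δ * (A 1 * (T (∑ k, q k ^ 2) - A (∑ k, q k ^ 2)) +
             A (∑ k, q k ^ 2) * (T 1 - A 1) +
             2 * (A 1 * A (∑ k, q k ^ 2) - ∑ k, A (q k) ^ 2) +
             2 * ∑ k, A (q k) * (A (q k) - T (q k))) := by
  obtain ⟨δ, hδ, bound⟩ := exists_abs_sub_le_add_mul_sum_sq q f hf hε
  have kernel (x y : K) : ∑ k, (q k x - q k y) ^ 2 =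
      (∑ k, q k ^ 2) x + (∑ k, q k ^ 2) y - 2 * ∑ k, q k y * q k x := by
    simp only [ContinuousMap.sum_apply, ContinuousMap.pow_apply, Finset.mul_sum,
      ← Finset.sum_add_distrib, ← Finset.sum_sub_distrib]
    exact Finset.sum_congr rfl fun k _ => by ring
  refine ⟨δ, hδ, fun T A hT hA => ?_⟩
  have estimate := hT.abs_map_mul_map_one_sub_le hA hq hδ.le fun x y =>
    kernel x y ▸ bound x y
  have regroup : ∑ k, A (q k) * (A (q k) - T (q k)) =
      ∑ k, A (q k) ^ 2 - ∑ k, T (q k) * A (q k) := by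
    rw [← Finset.sum_sub_distrib]
    exact Finset.sum_congr rfl fun k _ => by ring
  rw [regroup]
  exact estimate.trans_eq (by ring)

section TestFunctions

variable {N : ℕ} {K : Set (EuclideanSpace ℝ (Fin N))} {α : ℝ}

theorem testQ_apply (k : Fin N) (x : K) :
    testQ K α k x = -((x : EuclideanSpace ℝ (Fin N)) k + α) :=
  (neg_add' _ _).symm

theorem testP_eq_sum_testQ_sq : testP K α = ∑ k, testQ K α k ^ 2 :=
  Finset.sum_congr rfl fun k _ => by rw [testQ, ← neg_add', neg_sq]

theorem eq_of_forall_testQ_eq {x y : K} (h : ∀ k, testQ K α k x = testQ K α k y) : x = y := by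
  ext k
  simpa [testQ_apply] using h k

theorem neg_apply_le_posDeficit (hK : Bornology.IsBounded K) {x : EuclideanSpace ℝ (Fin N)}
    (hx : x ∈ K) (k : Fin N) : -x k ≤ posDeficit K := by
  obtain ⟨R, hR⟩ := hK.exists_norm_le
  refine le_csInf ⟨R, (norm_nonneg x).trans (hR x hx), fun y hy j => ?_⟩ fun a ha => ?_
  · have abs_le : |y j| ≤ R := (PiLp.norm_apply_le y j).trans (hR y hy)
    linarith [neg_abs_le (y j)]
  · linarith [ha.2 x hx k]

theorem testQ_nonpos (hK : Bornology.IsBounded K) (hα : posDeficit K ≤ α) (k : Fin N) :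
    testQ K α k ≤ 0 := by
  refine ContinuousMap.le_def.2 fun x => ?_
  rw [testQ_apply, ContinuousMap.zero_apply]
  linarith [neg_apply_le_posDeficit hK x.2 k]

end TestFunctions

/-- **The a priori estimate (Lemma 3), pointwise form.** For weakly nonlinear and monotone
operators `T, A : C(K) → C(X)` and `α ≥ α(K,u)`, every `f ∈ C(K)` and `ε > 0` admit a
`δ > 0` such that the displayed pointwise inequality holds on `X`. -/
theorem pointwise_a_priori_estimate
    {N : ℕ} (K : Set (EuclideanSpace ℝ (Fin N))) [CompactSpace K]
    {X : Type*} [TopologicalSpace X] [CompactSpace X] [T2Space X]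
    (T A : C(K, ℝ) → C(X, ℝ))
    (hTsub : ∀ f g : C(K, ℝ), T (f + g) ≤ T f + T g)
    (hTpos : ∀ (a : ℝ), 0 ≤ a → ∀ f : C(K, ℝ), T (a • f) = a • T f)
    (hTtr : ∀ f : C(K, ℝ), ∀ a : ℝ, 0 ≤ a → T (f + a • 1) = T f + a • T 1)
    (hTmono : Monotone T)
    (hAsub : ∀ f g : C(K, ℝ), A (f + g) ≤ A f + A g)
    (hApos : ∀ (a : ℝ), 0 ≤ a → ∀ f : C(K, ℝ), A (a • f) = a • A f)
    (hAtr : ∀ f : C(K, ℝ), ∀ a : ℝ, 0 ≤ a → A (f + a • 1) = A f + a • A 1)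
    (hAmono : Monotone A)
    (α : ℝ) (hα : posDeficit K ≤ α)
    (f : C(K, ℝ)) {ε : ℝ} (hε : 0 < ε) :
    ∃ δ : ℝ, 0 < δ ∧ ∀ t : X,
      |T f t * A 1 t - T 1 t * A f t| ≤
        ε * (T 1 t * A 1 t) +
        δ * (A 1 t * (T (testP K α) t - A (testP K α) t) +
             A (testP K α) t * (T 1 t - A 1 t) +
             2 * (A 1 t * A (testP K α) t - ∑ k : Fin N, (A (testQ K α k) t) ^ 2) +
             2 * ∑ k : Fin N, A (testQ K α k) t * (A (testQ K α k) t - T (testQ K α k) t)) := by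
  have hK : IsCompact K := isCompact_iff_compactSpace.2 inferInstance
  obtain ⟨δ, hδ, bound⟩ := pointwise_a_priori_estimate_general (testQ K α)
    (testQ_nonpos hK.isBounded hα) f (fun _ _ h => congrArg f (eq_of_forall_testQ_eq h)) hε
  have hT : IsMonotoneWeaklyNonlinear T := ⟨hTsub, hTpos, hTtr, hTmono⟩
  have hA : IsMonotoneWeaklyNonlinear A := ⟨hAsub, hApos, hAtr, hAmono⟩
  rw [testP_eq_sum_testQ_sq]
  exact ⟨δ, hδ, fun t => bound _ _ (hT.eval t) (hA.eval t)⟩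
end

section
/- Let K be a compact subset of ℝ^N, X a compact Hausdorff space, and let T_n (n ∈ ℕ) and A be weakly nonlinear and monotone operators from C(K) into C(X). Assume (i) A(1)(t) > 0 for every t ∈ X, and (ii) for some α ≥ α(K,u), A(1)·A(p) = Σ_{k=1}^N (A(q_k))², where p = Σ_{k=1}^N (pr_k + α)² and q_k = −pr_k − α. Then lim_{n→∞} ‖T_n(f) − A(f)‖ = 0 for every f ∈ C(K) if and only if lim_{n→∞} ‖T_n(f) − A(f)‖ = 0 for each of the N+2 test functions 1, q_1, …, q_N and p (sup-norm on C(X)). -/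
open Filter

/-!
Write `g_k = pr_k + α ≥ 0`, so that `q_k = -g_k` and `p = ∑ g_k²`. For a weakly nonlinear monotone
functional `L` on `C(K)` and `c ≥ 0`, expanding the square gives
`L (∑ (g_k - c_k)²) ≤ L p + ∑ 2 c_k L q_k + (∑ c_k²) L 1`; it is here that the signs matter, since
`L` only commutes with nonnegative scalars. If `L 1 > 0` and `L 1 * L p = ∑ (L q_k)²`, the
right-hand side vanishes at `c_k = -L q_k / L 1`. As `L` is monotone, `∑ (g_k - c_k)²` must then
vanish at some `y`, so `c = g y`.

Since the `g_k` separate points, compactness gives `|f x - f y| ≤ ε + C ∑ (g_k x - g_k y)²`, hence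
`|L f - f y * L 1| ≤ ε L 1 + C (L p + ∑ 2 g_k(y) L q_k + (∑ g_k(y)²) L 1)` for every `L` and `y`.
Applied to `A · t` this gives `A f t = f y * A 1 t` for the point `y` found above. Applied to
`T_n · t` at the same `y`, it bounds `T_n f - A f`, because the expression in brackets is a
continuous function on `X × K` which depends continuously on `T_n p`, `T_n q_k`, `T_n 1` and is zero
at `(t, y)` when `T_n` is replaced by `A`.
-/

open Topology

/-- Weakly nonlinear (sublinear and translatable) maps on `C(Y)`. The codomain is an arbitrary
ordered vector space, so that the notion covers both operators into `C(X)` and real functionals. -/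
structure IsWeaklyNonlinear {Y F : Type*} [TopologicalSpace Y] [AddCommGroup F] [PartialOrder F]
    [Module ℝ F] (T : C(Y, ℝ) → F) : Prop where
  map_add_le (f g : C(Y, ℝ)) : T (f + g) ≤ T f + T g
  map_smul (a : ℝ) (ha : 0 ≤ a) (f : C(Y, ℝ)) : T (a • f) = a • T f
  map_add_smul_one (f : C(Y, ℝ)) (a : ℝ) (ha : 0 ≤ a) : T (f + a • 1) = T f + a • T 1

namespace IsWeaklyNonlinear

variable {Y : Type*} [TopologicalSpace Y]

section Operator

variable {F : Type*} [AddCommGroup F] [PartialOrder F] [Module ℝ F] {T : C(Y, ℝ) → F}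

theorem map_zero (hT : IsWeaklyNonlinear T) : T 0 = 0 := by
  simpa only [zero_smul] using hT.map_smul 0 le_rfl 0

theorem map_smul_one (hT : IsWeaklyNonlinear T) (c : ℝ) : T (c • 1) = c • T 1 := by
  rcases le_total 0 c with hc | hc
  · exact hT.map_smul c hc 1
  · have h := hT.map_add_smul_one (c • 1) (-c) (neg_nonneg.2 hc)
    rw [← add_smul, add_neg_cancel, zero_smul, hT.map_zero, neg_smul] at h
    exact add_neg_eq_zero.1 h.symm

theorem map_sum_le [IsOrderedAddMonoid F] {κ : Type*} (hT : IsWeaklyNonlinear T) (s : Finset κ)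
    (f : κ → C(Y, ℝ)) : T (∑ k ∈ s, f k) ≤ ∑ k ∈ s, T (f k) :=
  Finset.le_sum_of_subadditive T hT.map_zero.le hT.map_add_le s f

end Operator

theorem comp_eval {X : Type*} [TopologicalSpace X] {T : C(Y, ℝ) → C(X, ℝ)}
    (hT : IsWeaklyNonlinear T) (t : X) : IsWeaklyNonlinear fun f => T f t where
  map_add_le f g := hT.map_add_le f g t
  map_smul a ha f := DFunLike.congr_fun (hT.map_smul a ha f) t
  map_add_smul_one f a ha := DFunLike.congr_fun (hT.map_add_smul_one f a ha) t

variable {L : C(Y, ℝ) → ℝ}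

theorem abs_sub_mul_le (hL : IsWeaklyNonlinear L) (hmono : Monotone L) {f φ : C(Y, ℝ)}
    {v ε C : ℝ} (hC : 0 ≤ C) (hf : ∀ x, |f x - v| ≤ ε + C * φ x) :
    |L f - v * L 1| ≤ ε * L 1 + C * L φ := by
  have upper : L f ≤ (v + ε) * L 1 + C * L φ := by
    rw [← smul_eq_mul, ← hL.map_smul_one, ← smul_eq_mul C, ← hL.map_smul C hC]
    refine (hmono (ContinuousMap.le_def.2 fun x => ?_)).trans (hL.map_add_le _ _)
    simp only [ContinuousMap.add_apply, ContinuousMap.smul_apply, ContinuousMap.one_apply,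
      smul_eq_mul]
    linarith [(abs_le.1 (hf x)).2]
  have lower : (v - ε) * L 1 ≤ L f + C * L φ := by
    rw [← smul_eq_mul, ← hL.map_smul_one, ← smul_eq_mul C, ← hL.map_smul C hC]
    refine (hmono (ContinuousMap.le_def.2 fun x => ?_)).trans (hL.map_add_le _ _)
    simp only [ContinuousMap.add_apply, ContinuousMap.smul_apply, ContinuousMap.one_apply,
      smul_eq_mul]
    linarith [(abs_le.1 (hf x)).1]
  rw [abs_le]
  constructor <;> linarith

theorem exists_apply_nonpos [CompactSpace Y] (hL : IsWeaklyNonlinear L) (hmono : Monotone L)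
    (hL1 : 0 < L 1) {φ : C(Y, ℝ)} (hφ : L φ ≤ 0) : ∃ y, φ y ≤ 0 := by
  by_contra! hpos
  obtain ⟨d, hd, hle⟩ :=
    isCompact_univ.exists_forall_le' φ.continuous.continuousOn fun x _ => hpos x
  have hdφ : d • (1 : C(Y, ℝ)) ≤ φ := fun x => by simpa using hle x (Set.mem_univ x)
  have : d * L 1 ≤ L φ := by simpa only [hL.map_smul_one, smul_eq_mul] using hmono hdφ
  exact (mul_pos hd hL1).not_ge (this.trans hφ)

end IsWeaklyNonlinear

theorem exists_le_add_mul_of_eq_zero_imp_nonpos {Z : Type*} [TopologicalSpace Z] [CompactSpace Z]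
    {u φ : Z → ℝ} (hu : Continuous u) (hφ : Continuous φ) (hφ0 : 0 ≤ φ) (h : ∀ z, φ z = 0 → u z ≤ 0)
    {ε : ℝ} (hε : 0 < ε) : ∃ C, 0 ≤ C ∧ ∀ z, u z ≤ ε + C * φ z := by
  have hφpos : ∀ z ∈ {z | ε ≤ u z}, 0 < φ z := fun z hz =>
    (hφ0 z).lt_of_ne' fun h0 => (hε.trans_le hz).not_ge (h z h0)
  obtain ⟨M, hM⟩ := (isClosed_le continuous_const hu).isCompact.exists_bound_of_continuousOn
    (hu.continuousOn.div hφ.continuousOn fun z hz => (hφpos z hz).ne')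
  refine ⟨max M 0, le_max_right _ _, fun z => ?_⟩
  rcases lt_or_ge (u z) ε with hz | hz
  · have : 0 ≤ max M 0 * φ z := mul_nonneg (le_max_right _ _) (hφ0 z)
    linarith
  · have : u z / φ z ≤ max M 0 := (Real.le_norm_self _).trans ((hM z hz).trans (le_max_left _ _))
    linarith [(div_le_iff₀ (hφpos z hz)).1 this]

section Moment

variable {Y κ : Type*} [TopologicalSpace Y] [Fintype κ]

/-- The squared Euclidean distance from `(g_k x)_k` to the point `c`, as a function of `x`.
For `c = g y` with `g` separating points, it controls the oscillation `|f x - f y|`. -/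
def sqDistTo (g : κ → C(Y, ℝ)) (c : κ → ℝ) : C(Y, ℝ) :=
  ∑ k, (g k - c k • 1) ^ 2

/-- The value of `L (∑ (g_k - c_k)²)` if `L` were linear, written in terms of the test functions
`∑ g_k²`, `-g_k` and `1`. For a sublinear `L` and `c ≥ 0` it is an upper bound. -/
def sqMoment (g : κ → C(Y, ℝ)) (L : C(Y, ℝ) → ℝ) (c : κ → ℝ) : ℝ :=
  L (∑ k, g k ^ 2) + ∑ k, 2 * c k * L (-g k) + (∑ k, c k ^ 2) * L 1

variable {g : κ → C(Y, ℝ)} {c : κ → ℝ}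

theorem sqDistTo_apply (x : Y) : sqDistTo g c x = ∑ k, (g k x - c k) ^ 2 := by
  simp [sqDistTo]

theorem sqDistTo_apply_nonpos_iff {x : Y} : sqDistTo g c x ≤ 0 ↔ ∀ k, g k x = c k := by
  have hnonneg : 0 ≤ ∑ k, (g k x - c k) ^ 2 := by positivity
  rw [sqDistTo_apply, hnonneg.ge_iff_eq', Finset.sum_eq_zero_iff_of_nonneg fun k _ => sq_nonneg _]
  simp [sub_eq_zero]

theorem sqDistTo_eq : sqDistTo g c =
    ∑ k, g k ^ 2 + ∑ k, (2 * c k) • -g k + (∑ k, c k ^ 2) • (1 : C(Y, ℝ)) := by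
  ext x
  simp only [sqDistTo_apply, ContinuousMap.add_apply, ContinuousMap.sum_apply,
    ContinuousMap.smul_apply, ContinuousMap.one_apply, ContinuousMap.pow_apply,
    ContinuousMap.neg_apply, smul_eq_mul, mul_one, ← Finset.sum_add_distrib]
  exact Finset.sum_congr rfl fun k _ => by ring

variable {L : C(Y, ℝ) → ℝ}

theorem IsWeaklyNonlinear.map_sqDistTo_le (hL : IsWeaklyNonlinear L) (hc : 0 ≤ c) :
    L (sqDistTo g c) ≤ sqMoment g L c := by
  have map_linear_le : L (∑ k, (2 * c k) • -g k) ≤ ∑ k, 2 * c k * L (-g k) := by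
    refine (hL.map_sum_le _ _).trans_eq (Finset.sum_congr rfl fun k _ => ?_)
    exact hL.map_smul _ (mul_nonneg zero_le_two (hc k)) _
  calc L (sqDistTo g c)
      = L (∑ k, g k ^ 2 + ∑ k, (2 * c k) • -g k) + (∑ k, c k ^ 2) * L 1 := by
        rw [sqDistTo_eq, hL.map_add_smul_one _ _ (by positivity), smul_eq_mul]
    _ ≤ L (∑ k, g k ^ 2) + L (∑ k, (2 * c k) • -g k) + (∑ k, c k ^ 2) * L 1 := by
        gcongr
        exact hL.map_add_le _ _
    _ ≤ sqMoment g L c := by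
        unfold sqMoment
        gcongr

theorem sqMoment_neg_div_eq_zero (hL1 : L 1 ≠ 0) (hL : L 1 * L (∑ k, g k ^ 2) = ∑ k, L (-g k) ^ 2) :
    sqMoment g L (fun k => -L (-g k) / L 1) = 0 := by
  have hp : L (∑ k, g k ^ 2) = (∑ k, L (-g k) ^ 2) / L 1 := by
    rw [← hL, mul_div_cancel_left₀ _ hL1]
  simp only [sqMoment, hp, Finset.sum_div, Finset.sum_mul, ← Finset.sum_add_distrib]
  refine Finset.sum_eq_zero fun k _ => ?_
  field

variable [CompactSpace Y]

theorem IsWeaklyNonlinear.exists_sqMoment_eq_zero (hL : IsWeaklyNonlinear L) (hmono : Monotone L)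
    (hL1 : 0 < L 1) (hg : ∀ k, 0 ≤ g k)
    (hfe : L 1 * L (∑ k, g k ^ 2) = ∑ k, L (-g k) ^ 2) :
    ∃ y, sqMoment g L (fun k => g k y) = 0 := by
  have hc : ∀ k, 0 ≤ -L (-g k) / L 1 := fun k => by
    have : L (-g k) ≤ 0 := (hmono (neg_nonpos.2 (hg k))).trans_eq hL.map_zero
    exact div_nonneg (neg_nonneg.2 this) hL1.le
  have hzero := sqMoment_neg_div_eq_zero hL1.ne' hfe
  obtain ⟨y, hy⟩ := hL.exists_apply_nonpos hmono hL1 ((hL.map_sqDistTo_le hc).trans_eq hzero)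
  exact ⟨y, by simpa only [sqDistTo_apply_nonpos_iff.1 hy] using hzero⟩

theorem exists_abs_sub_le_add_mul_sqDistTo (hinj : Function.Injective fun x k => g k x)
    (f : C(Y, ℝ)) {ε : ℝ} (hε : 0 < ε) :
    ∃ C, 0 ≤ C ∧ ∀ x y, |f x - f y| ≤ ε + C * sqDistTo g (fun k => g k y) x := by
  have hcont : Continuous fun z : Y × Y => ∑ k, (g k z.1 - g k z.2) ^ 2 := by fun_prop
  have hdiag (z : Y × Y) (hz : ∑ k, (g k z.1 - g k z.2) ^ 2 = 0) : |f z.1 - f z.2| ≤ 0 := by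
    rw [← sqDistTo_apply] at hz
    have heq : z.1 = z.2 := hinj (funext (sqDistTo_apply_nonpos_iff.1 hz.le))
    rw [heq, sub_self, abs_zero]
  obtain ⟨C, hC, hle⟩ := exists_le_add_mul_of_eq_zero_imp_nonpos (by fun_prop) hcont
    (fun z => Finset.sum_nonneg fun k _ => sq_nonneg _) hdiag hε
  exact ⟨C, hC, fun x y => by simpa only [sqDistTo_apply] using hle (x, y)⟩

theorem exists_forall_isWeaklyNonlinear_abs_sub_mul_le (hg : ∀ k, 0 ≤ g k)
    (hinj : Function.Injective fun x k => g k x) (f : C(Y, ℝ)) {ε : ℝ} (hε : 0 < ε) :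
    ∃ C, 0 ≤ C ∧ ∀ L : C(Y, ℝ) → ℝ, IsWeaklyNonlinear L → Monotone L → ∀ y,
      |L f - f y * L 1| ≤ ε * L 1 + C * sqMoment g L (fun k => g k y) := by
  obtain ⟨C, hC, hle⟩ := exists_abs_sub_le_add_mul_sqDistTo hinj f hε
  refine ⟨C, hC, fun L hL hmono y => ?_⟩
  have hmoment := hL.map_sqDistTo_le (g := g) (c := fun k => g k y) fun k => hg k y
  exact (hL.abs_sub_mul_le hmono hC fun x => hle x y).trans (by gcongr)

theorem IsWeaklyNonlinear.eq_apply_mul_of_sqMoment_eq_zero (hL : IsWeaklyNonlinear L)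
    (hmono : Monotone L) (hg : ∀ k, 0 ≤ g k) (hinj : Function.Injective fun x k => g k x)
    {y : Y} (hy : sqMoment g L (fun k => g k y) = 0) (f : C(Y, ℝ)) : L f = f y * L 1 := by
  suffices h : |L f - f y * L 1| ≤ 0 from sub_eq_zero.1 (abs_nonpos_iff.1 h)
  refine le_of_forall_pos_le_add fun δ hδ => ?_
  obtain ⟨ε, hε, hεδ⟩ := exists_pos_mul_lt hδ (L 1)
  obtain ⟨C, -, hle⟩ := exists_forall_isWeaklyNonlinear_abs_sub_mul_le hg hinj f hε
  have := hle L hL hmono y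
  rw [hy] at this
  linarith

end Moment

section Convergence

variable {X Y κ : Type*} [TopologicalSpace X] [TopologicalSpace Y] [Fintype κ]

/-- The function `(t, y) ↦ sqMoment g (T · t) (g y)` as an element of `C(X × Y)`; its sup-norm makes
estimates on `sqMoment` uniform in both variables. -/
def sqMomentKernel (g : κ → C(Y, ℝ)) (T : C(Y, ℝ) → C(X, ℝ)) : C(X × Y, ℝ) :=
  (T (∑ k, g k ^ 2)).comp .fst + ∑ k, (2 : ℝ) • (g k).comp .snd * (T (-g k)).comp .fst +
    (∑ k, (g k).comp .snd ^ 2) * (T 1).comp .fst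

variable {g : κ → C(Y, ℝ)} {A : C(Y, ℝ) → C(X, ℝ)}

theorem sqMomentKernel_apply (T : C(Y, ℝ) → C(X, ℝ)) (t : X) (y : Y) :
    sqMomentKernel g T (t, y) = sqMoment g (fun f => T f t) (fun k => g k y) := by
  simp [sqMomentKernel, sqMoment, mul_assoc]

variable [CompactSpace X] [CompactSpace Y]

theorem tendsto_sqMomentKernel {ι : Type*} {l : Filter ι} {T : ι → C(Y, ℝ) → C(X, ℝ)}
    (hone : Tendsto (fun i => T i 1) l (𝓝 (A 1)))
    (hneg : ∀ k, Tendsto (fun i => T i (-g k)) l (𝓝 (A (-g k))))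
    (hsq : Tendsto (fun i => T i (∑ k, g k ^ 2)) l (𝓝 (A (∑ k, g k ^ 2)))) :
    Tendsto (fun i => sqMomentKernel g (T i)) l (𝓝 (sqMomentKernel g A)) := by
  have comp_fst {u : ι → C(X, ℝ)} {v : C(X, ℝ)} (h : Tendsto u l (𝓝 v)) :
      Tendsto (fun i => (u i).comp .fst) l (𝓝 (v.comp (.fst : C(X × Y, X)))) :=
    ((ContinuousMap.continuous_precomp _).tendsto v).comp h
  exact ((comp_fst hsq).add (tendsto_finsetSum _ fun k _ => (comp_fst (hneg k)).const_mul _)).add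
    ((comp_fst hone).const_mul _)

theorem IsWeaklyNonlinear.exists_forall_norm_sub_le (hA : IsWeaklyNonlinear A)
    (hAmono : Monotone A) (hA1 : ∀ t, 0 < A 1 t) (hg : ∀ k, 0 ≤ g k)
    (hinj : Function.Injective fun x k => g k x)
    (hfe : A 1 * A (∑ k, g k ^ 2) = ∑ k, A (-g k) ^ 2) (f : C(Y, ℝ)) {ε : ℝ} (hε : 0 < ε) :
    ∃ C, 0 ≤ C ∧ ∀ T : C(Y, ℝ) → C(X, ℝ), IsWeaklyNonlinear T → Monotone T →
      ‖T f - A f‖ ≤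
        ε * ‖T 1‖ + C * ‖sqMomentKernel g T - sqMomentKernel g A‖ + ‖f‖ * ‖T 1 - A 1‖ := by
  obtain ⟨C, hC, hle⟩ := exists_forall_isWeaklyNonlinear_abs_sub_mul_le hg hinj f hε
  refine ⟨C, hC, fun T hT hTmono => (ContinuousMap.norm_le _ (by positivity)).2 fun t => ?_⟩
  have hAtmono : Monotone fun f => A f t := fun _ _ h => hAmono h t
  obtain ⟨y, hy⟩ := (hA.comp_eval t).exists_sqMoment_eq_zero hAtmono (hA1 t) hg
    (by simpa using DFunLike.congr_fun hfe t)
  have hAf : A f t = f y * A 1 t :=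
    (hA.comp_eval t).eq_apply_mul_of_sqMoment_eq_zero hAtmono hg hinj hy f
  have hkernel : sqMoment g (fun f => T f t) (fun k => g k y) ≤
      ‖sqMomentKernel g T - sqMomentKernel g A‖ := by
    have := (sqMomentKernel g T - sqMomentKernel g A).apply_le_norm (t, y)
    rwa [ContinuousMap.sub_apply, sqMomentKernel_apply, sqMomentKernel_apply, hy, sub_zero] at this
  calc ‖(T f - A f) t‖
      = |(T f t - f y * T 1 t) + f y * (T 1 - A 1) t| := by
        rw [Real.norm_eq_abs, ContinuousMap.sub_apply, ContinuousMap.sub_apply, hAf]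
        ring_nf
    _ ≤ |T f t - f y * T 1 t| + |f y| * |(T 1 - A 1) t| := by
        rw [← abs_mul]
        exact abs_add_le _ _
    _ ≤ (ε * T 1 t + C * sqMoment g (fun f => T f t) (fun k => g k y)) +
          |f y| * |(T 1 - A 1) t| := by
        gcongr
        exact hle _ (hT.comp_eval t) (fun _ _ h => hTmono h t) y
    _ ≤ _ := by
        gcongr
        · exact (T 1).apply_le_norm t
        · exact f.norm_coe_le_norm y
        · exact (T 1 - A 1).norm_coe_le_norm t

theorem korovkin_weakly_nonlinear_general {ι : Type*} {l : Filter ι}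
    {T : ι → C(Y, ℝ) → C(X, ℝ)} (hT : ∀ i, IsWeaklyNonlinear (T i)) (hTmono : ∀ i, Monotone (T i))
    (hA : IsWeaklyNonlinear A) (hAmono : Monotone A) (hA1 : ∀ t, 0 < A 1 t)
    (hg : ∀ k, 0 ≤ g k) (hinj : Function.Injective fun x k => g k x)
    (hfe : A 1 * A (∑ k, g k ^ 2) = ∑ k, A (-g k) ^ 2) :
    (∀ f, Tendsto (fun i => T i f) l (𝓝 (A f))) ↔
      Tendsto (fun i => T i 1) l (𝓝 (A 1)) ∧
      (∀ k, Tendsto (fun i => T i (-g k)) l (𝓝 (A (-g k)))) ∧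
      Tendsto (fun i => T i (∑ k, g k ^ 2)) l (𝓝 (A (∑ k, g k ^ 2))) := by
  refine ⟨fun h => ⟨h _, fun k => h _, h _⟩, fun ⟨hone, hneg, hsq⟩ f => ?_⟩
  rw [Metric.tendsto_nhds]
  intro δ hδ
  obtain ⟨ε, hε, hεδ⟩ := exists_pos_mul_lt hδ ‖A 1‖
  obtain ⟨C, -, hle⟩ := hA.exists_forall_norm_sub_le hAmono hA1 hg hinj hfe f hε
  have hkernel := tendsto_iff_norm_sub_tendsto_zero.1 (tendsto_sqMomentKernel hone hneg hsq)
  have hbound : Tendsto (fun i => ε * ‖T i 1‖ + C * ‖sqMomentKernel g (T i) - sqMomentKernel g A‖ +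
      ‖f‖ * ‖T i 1 - A 1‖) l (𝓝 (ε * ‖A 1‖ + C * 0 + ‖f‖ * 0)) :=
    ((hone.norm.const_mul ε).add (hkernel.const_mul C)).add
      ((tendsto_iff_norm_sub_tendsto_zero.1 hone).const_mul ‖f‖)
  filter_upwards [hbound.eventually_lt_const (u := δ) (by linarith)] with i hi
  rw [dist_eq_norm]
  exact (hle (T i) (hT i) (hTmono i)).trans_lt hi

end Convergence

section TestFunctions

variable {N : ℕ} {K : Set (EuclideanSpace ℝ (Fin N))} {α : ℝ}

theorem add_nonneg_of_posDeficit_le (hK : Bornology.IsBounded K) (hα : posDeficit K ≤ α)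
    {x : EuclideanSpace ℝ (Fin N)} (hx : x ∈ K) (k : Fin N) : 0 ≤ x k + α := by
  -- This rules out the junk value `sInf ∅ = 0`.
  have hne : {a : ℝ | 0 ≤ a ∧ ∀ x ∈ K, ∀ k, 0 ≤ x k + a}.Nonempty := by
    obtain ⟨R, hR, hKR⟩ := hK.exists_pos_norm_le
    refine ⟨R, hR.le, fun x hx k => ?_⟩
    have : |x k| ≤ R := (PiLp.norm_apply_le x k).trans (hKR x hx)
    linarith [neg_abs_le (x k)]
  have : -x k ≤ posDeficit K := le_csInf hne fun a ha => by linarith [ha.2 x hx k]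
  linarith

theorem coordCM_add_const_nonneg [CompactSpace K] (hα : posDeficit K ≤ α) (k : Fin N) :
    0 ≤ coordCM K k + ContinuousMap.const K α := fun x =>
  add_nonneg_of_posDeficit_le (isCompact_iff_compactSpace.2 ‹_›).isBounded hα x.2 k

theorem injective_coordCM_add_const :
    Function.Injective fun (x : K) k => (coordCM K k + ContinuousMap.const K α) x := fun _ _ h =>
  Subtype.ext (PiLp.ext fun k => add_right_cancel (congrFun h k))

theorem testQ_eq_neg (k : Fin N) : testQ K α k = -(coordCM K k + ContinuousMap.const K α) :=
  (neg_add' _ _).symm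

end TestFunctions

/-- **Korovkin-type theorem for weakly nonlinear monotone operators (Theorem 3).**
If `T_n, A : C(K) → C(X)` are weakly nonlinear and monotone, `A(1)` is strictly positive and
`A(1)·A(p) = Σ_k (A(q_k))²` for some `α ≥ α(K,u)`, then `‖T_n f − A f‖ → 0` for all
`f ∈ C(K)` iff it holds for the `N + 2` test functions `1, q_1, …, q_N, p`. -/
theorem korovkin_weakly_nonlinear
    {N : ℕ} (K : Set (EuclideanSpace ℝ (Fin N))) [CompactSpace K]
    {X : Type*} [TopologicalSpace X] [CompactSpace X] [T2Space X]
    (T : ℕ → C(K, ℝ) → C(X, ℝ)) (A : C(K, ℝ) → C(X, ℝ))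
    (hTsub : ∀ n, ∀ f g : C(K, ℝ), T n (f + g) ≤ T n f + T n g)
    (hTpos : ∀ n, ∀ (a : ℝ), 0 ≤ a → ∀ f : C(K, ℝ), T n (a • f) = a • T n f)
    (hTtr : ∀ n, ∀ f : C(K, ℝ), ∀ a : ℝ, 0 ≤ a → T n (f + a • 1) = T n f + a • T n 1)
    (hTmono : ∀ n, Monotone (T n))
    (hAsub : ∀ f g : C(K, ℝ), A (f + g) ≤ A f + A g)
    (hApos : ∀ (a : ℝ), 0 ≤ a → ∀ f : C(K, ℝ), A (a • f) = a • A f)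
    (hAtr : ∀ f : C(K, ℝ), ∀ a : ℝ, 0 ≤ a → A (f + a • 1) = A f + a • A 1)
    (hAmono : Monotone A)
    (hA1pos : ∀ t : X, 0 < A 1 t)
    (α : ℝ) (hα : posDeficit K ≤ α)
    (hAfe : A 1 * A (testP K α) = ∑ k : Fin N, (A (testQ K α k)) ^ 2) :
    (∀ f : C(K, ℝ), Tendsto (fun n => ‖T n f - A f‖) atTop (nhds 0)) ↔
      (Tendsto (fun n => ‖T n 1 - A 1‖) atTop (nhds 0) ∧
       (∀ k : Fin N, Tendsto (fun n => ‖T n (testQ K α k) - A (testQ K α k)‖) atTop (nhds 0)) ∧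
       Tendsto (fun n => ‖T n (testP K α) - A (testP K α)‖) atTop (nhds 0)) := by
  simp only [← tendsto_iff_norm_sub_tendsto_zero, testQ_eq_neg] at hAfe ⊢
  exact korovkin_weakly_nonlinear_general (fun n => ⟨hTsub n, hTpos n, hTtr n⟩) hTmono
    ⟨hAsub, hApos, hAtr⟩ hAmono hA1pos (coordCM_add_const_nonneg hα) injective_coordCM_add_const
    hAfe
end

section
/- Let φ : [0,1] → [0,1] be a continuous function and for each n ∈ ℕ define the operator T_n : C([0,1]) → C([0,1]) by T_n(f)(x) = Σ_{k=0}^n C(n,k)·φ(x)^k·(1 − φ(x))^{n−k} · sup{ f(t) : k/(n+1) ≤ t ≤ (k+1)/(n+1) }. Then for every f ∈ C([0,1]), T_n(f) → f ∘ φ uniformly on [0,1] as n → ∞. -/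
open Filter

/-!
The Bernstein node `k / n` lies in the cell `[k / (n + 1), (k + 1) / (n + 1)]`, whose width tends to
zero. By uniform continuity the supremum of `f` over the cell is therefore close to `f (k / n)`,
uniformly in `k`. The Bernstein weights are nonnegative with sum one, so the operator differs from
the classical Bernstein approximation by no more than this error, and Bernstein's theorem applies.
-/

open scoped unitInterval

theorem dist_sSup_image_le {α : Type*} {f : α → ℝ} {s : Set α} {a : α} {ε : ℝ} (ha : a ∈ s)
    (hf : ∀ x ∈ s, dist (f x) (f a) ≤ ε) : dist (sSup (f '' s)) (f a) ≤ ε := by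
  have hupper : f a + ε ∈ upperBounds (f '' s) := by
    rintro _ ⟨x, hx, rfl⟩
    linarith [(abs_le.1 (hf x hx)).2]
  have hle : sSup (f '' s) ≤ f a + ε := csSup_le ⟨f a, a, ha, rfl⟩ hupper
  have hge : f a ≤ sSup (f '' s) := le_csSup ⟨_, hupper⟩ ⟨a, ha, rfl⟩
  rw [Real.dist_eq, abs_of_nonneg (sub_nonneg.2 hge)]
  linarith

section WeightedSums

variable {E : Type*} [SeminormedAddCommGroup E] [NormedSpace ℝ E]

theorem dist_sum_smul_le_of_sum_eq_one {ι : Type*} {s : Finset ι} {w : ι → ℝ} {a b : ι → E}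
    {ε : ℝ} (hw₀ : ∀ i ∈ s, 0 ≤ w i) (hw₁ : ∑ i ∈ s, w i = 1)
    (hab : ∀ i ∈ s, dist (a i) (b i) ≤ ε) :
    dist (∑ i ∈ s, w i • a i) (∑ i ∈ s, w i • b i) ≤ ε := by
  have hball : ∑ i ∈ s, w i • (a i - b i) ∈ Metric.closedBall (0 : E) ε :=
    (convex_closedBall 0 ε).sum_mem hw₀ hw₁ fun i hi => by
      simpa only [mem_closedBall_zero_iff, dist_eq_norm] using hab i hi
  simpa only [mem_closedBall_zero_iff, smul_sub, Finset.sum_sub_distrib, ← dist_eq_norm]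
    using hball

theorem tendstoUniformly_sum_bernstein_smul (f : C(I, E)) {a : (n : ℕ) → Fin (n + 1) → E}
    (ha : ∀ ε > 0, ∀ᶠ n in atTop, ∀ k, dist (a n k) (f (bernstein.z k)) ≤ ε) :
    TendstoUniformly (fun n x => ∑ k : Fin (n + 1), bernstein n k x • a n k) f atTop := by
  rw [Metric.tendstoUniformly_iff]
  intro ε hε
  have happrox := Metric.tendstoUniformly_iff.1
    (ContinuousMap.tendsto_iff_tendstoUniformly.1 (bernsteinApproximation_uniform f))
    (ε / 2) (half_pos hε)
  filter_upwards [happrox, ha (ε / 2) (half_pos hε)] with n happrox_n ha_n x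
  have hsum : dist (∑ k : Fin (n + 1), bernstein n k x • a n k)
      (bernsteinApproximation n f x) ≤ ε / 2 := by
    rw [bernsteinApproximation.apply]
    exact dist_sum_smul_le_of_sum_eq_one (fun _ _ => bernstein_nonneg)
      (bernstein.probability n x) fun k _ => ha_n k
  linarith [dist_triangle_right (f x) (∑ k : Fin (n + 1), bernstein n k x • a n k)
    (bernsteinApproximation n f x), happrox_n x]

end WeightedSums

/-- The `k`-th of the `n + 1` closed intervals `[k / (n + 1), (k + 1) / (n + 1)]` of equal length
covering `[0, 1]`, as a subset of the unit interval; it is meant for `k ≤ n`. -/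
def bernsteinCell (n k : ℕ) : Set I :=
  {t | (k : ℝ) / (n + 1) ≤ (t : ℝ) ∧ (t : ℝ) ≤ ((k : ℝ) + 1) / (n + 1)}

theorem z_mem_bernsteinCell {n : ℕ} (k : Fin (n + 1)) : bernstein.z k ∈ bernsteinCell n k := by
  rcases n.eq_zero_or_pos with rfl | hn
  · simp [bernsteinCell, unitInterval.nonneg, unitInterval.le_one]
  · have hk : (k : ℝ) ≤ n := by exact_mod_cast k.is_le
    have hn' : (0 : ℝ) < n := by exact_mod_cast hn
    change (k : ℝ) / (n + 1) ≤ k / n ∧ (k : ℝ) / n ≤ (k + 1) / (n + 1)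
    constructor
    · gcongr
      linarith
    · rw [div_le_div_iff₀ hn' (by positivity)]
      linarith

theorem dist_le_of_mem_bernsteinCell {n k : ℕ} {s t : I} (hs : s ∈ bernsteinCell n k)
    (ht : t ∈ bernsteinCell n k) : dist s t ≤ 1 / ((n : ℝ) + 1) :=
  (Real.dist_le_of_mem_Icc hs ht).trans_eq (by ring)

theorem eventually_dist_sSup_image_bernsteinCell_le {f : I → ℝ} (hf : UniformContinuous f)
    {ε : ℝ} (hε : 0 < ε) : ∀ᶠ n in atTop, ∀ k : Fin (n + 1),
      dist (sSup (f '' bernsteinCell n k)) (f (bernstein.z k)) ≤ ε := by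
  obtain ⟨δ, hδ, hfδ⟩ := Metric.uniformContinuous_iff.1 hf ε hε
  have hwidth : ∀ᶠ n : ℕ in atTop, 1 / ((n : ℝ) + 1) < δ :=
    tendsto_one_div_add_atTop_nhds_zero_nat.eventually_lt_const hδ
  filter_upwards [hwidth] with n hn k
  have hz := z_mem_bernsteinCell k
  exact dist_sSup_image_le hz fun t ht =>
    (hfδ ((dist_le_of_mem_bernsteinCell ht hz).trans_lt hn)).le

/-- The nonlinear Bernstein-type operator `T_n` for `φ = id`: the Bernstein sum in which the value
of `f` at the node `k / n` is replaced by its supremum over the `k`-th cell. For general `φ` one has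
`T_n f = bernsteinSupOperator n f ∘ φ`. -/
noncomputable def bernsteinSupOperator (n : ℕ) (f : I → ℝ) (x : I) : ℝ :=
  ∑ k ∈ Finset.range (n + 1),
    (n.choose k : ℝ) * (x : ℝ) ^ k * (1 - (x : ℝ)) ^ (n - k) * sSup (f '' bernsteinCell n k)

theorem bernsteinSupOperator_eq_sum_bernstein_smul (n : ℕ) (f : I → ℝ) (x : I) :
    bernsteinSupOperator n f x =
      ∑ k : Fin (n + 1), bernstein n k x • sSup (f '' bernsteinCell n k) := by
  simp only [bernsteinSupOperator, Finset.sum_range, bernstein_apply, smul_eq_mul]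

theorem tendstoUniformly_bernsteinSupOperator (f : C(I, ℝ)) :
    TendstoUniformly (fun n => bernsteinSupOperator n f) f atTop := by
  have hf : UniformContinuous f := CompactSpace.uniformContinuous_of_continuous f.continuous
  have hsum := tendstoUniformly_sum_bernstein_smul f fun _ hε =>
    eventually_dist_sSup_image_bernsteinCell_le hf hε
  simpa only [← bernsteinSupOperator_eq_sum_bernstein_smul] using hsum

theorem bernstein_type_sup_operators_tendstoUniformly_general {X : Type*} (φ : X → I)
    (f : C(I, ℝ)) :
    TendstoUniformly (fun n x => bernsteinSupOperator n f (φ x)) (fun x => f (φ x)) atTop :=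
  (tendstoUniformly_bernsteinSupOperator f).comp φ

/-- **Convergence of nonlinear Bernstein-type operators (Example 1).** For a continuous
`φ : [0,1] → [0,1]`, the nonlinear operators
`T_n(f)(x) = Σ_{k=0}^n C(n,k) φ(x)^k (1−φ(x))^{n−k} · sup_{k/(n+1) ≤ t ≤ (k+1)/(n+1)} f(t)`
converge uniformly on `[0,1]` to `f ∘ φ`, for every `f ∈ C([0,1])`. -/
theorem bernstein_type_sup_operators_tendstoUniformly
    (φ : Set.Icc (0 : ℝ) 1 → Set.Icc (0 : ℝ) 1) (hφ : Continuous φ)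
    (f : C(Set.Icc (0 : ℝ) 1, ℝ)) :
    TendstoUniformly
      (fun (n : ℕ) (x : Set.Icc (0 : ℝ) 1) =>
        ∑ k ∈ Finset.range (n + 1),
          (n.choose k : ℝ) * (φ x : ℝ) ^ k * (1 - (φ x : ℝ)) ^ (n - k) *
            sSup (f '' {t : Set.Icc (0 : ℝ) 1 |
              (k : ℝ) / (n + 1) ≤ (t : ℝ) ∧ (t : ℝ) ≤ ((k : ℝ) + 1) / (n + 1)}))
      (fun x => f (φ x)) atTop := by
  exact bernstein_type_sup_operators_tendstoUniformly_general φ f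
end
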